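/- arXiv:1605.04239 — 2 statements merged into one kernel-verified Lean document; each statement's English description precedes it below -/
import Mathlib

section
/- Let ρ, Θ, θ, θ′ > 0 and n_0 ≥ 1 be constants. Then there exists a constant C > 0, depending only on ρ, Θ, θ, θ′ and n_0, with the following property. Let (λ_j)_{j≥1} be a sequence of nonnegative reals that is weakly logarithmic with these constants, i.e. (i) ρ^j · j · λ_j ≤ Θ for all j ≥ 1; (ii) ∑_{j≤n} ρ^j · j · λ_j ≥ θ·n for all n ≥ n_0; (iii) n·Q(n)·ρ^n ≥ θ′·exp{∑_{j≤n} λ_j ρ^j} for all n ≥ 1, where Q(n) := ∑_{ℓ(s̄)=n} ∏_{j≤n} λ_j^{s_j}/s_j!. Let n ≥ 1, let {h_j(k) : j,k ≥ 1, jk ≤ n} be an arbitrary real array extended by h_j(0) = 0, and define the additive function h(s̄) := ∑_{j=1}^n h_j(s_j) on the set Ω_n := { s̄ ∈ ℕ_0^n : ℓ(s̄) = n }, endowed with the probability measure P_n(s̄) := (1/Q(n)) ∏_{j≤n} λ_j^{s_j}/s_j!. Then the variance of h under P_n satisfies V_n h := E_n h² − (E_n h)² ≤ C · ∑_{j,k≥1,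 jk≤n} (λ_j^k h_j(k)² / k!) · Q^{{j}}(n − jk) / Q(n), where Q^{{j}}(m) := ∑_{ℓ(s̄)=m, s_j=0} ∏_{i≤m} λ_i^{s_i}/s_i! (and Q^{{j}}(0) := 1). -/
open Nat Finset

/-- The set of component-size vectors `s̄ ∈ ℕ₀ⁿ` with `ℓ(s̄) := 1·s_1 + ⋯ + n·s_n = n`. -/
def OmegaSet (n : ℕ) : Finset (Fin n → ℕ) :=
  (Fintype.piFinset fun _ : Fin n => Finset.range (n + 1)).filter
    (fun s : Fin n → ℕ => ∑ j : Fin n, ((j : ℕ) + 1) * s j = n)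

/-- The weight `∏_{j≤n} λ_j^{s_j}/s_j!` of a component-size vector. -/
noncomputable def wt (lam : ℕ → ℝ) (n : ℕ) (s : Fin n → ℕ) : ℝ :=
  ∏ j : Fin n, lam ((j : ℕ) + 1) ^ (s j) / ((s j)! : ℝ)

/-- `Q(n) := ∑_{ℓ(s̄)=n} ∏_{j≤n} λ_j^{s_j}/s_j!` (with `Q(0) = 1`). -/
noncomputable def Qfun (lam : ℕ → ℝ) (n : ℕ) : ℝ :=
  ∑ s ∈ OmegaSet n, wt lam n s

/-- `Q^{{j}}(m) := ∑_{ℓ(s̄)=m, s_j=0} ∏_{i≤m} λ_i^{s_i}/s_i!` (with `Q^{{j}}(0) = 1`). -/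
noncomputable def Qj (lam : ℕ → ℝ) (j m : ℕ) : ℝ :=
  ∑ s ∈ (OmegaSet m).filter (fun s : Fin m → ℕ => ∀ i : Fin m, (i : ℕ) + 1 = j → s i = 0),
    wt lam m s

/-- Expectation with respect to the measure `P_n(s̄) = (1/Q(n)) ∏_{j≤n} λ_j^{s_j}/s_j!`
on `Ω_n = { s̄ : ℓ(s̄) = n }`. -/
noncomputable def expectn (lam : ℕ → ℝ) (n : ℕ) (f : (Fin n → ℕ) → ℝ) : ℝ :=
  (∑ s ∈ OmegaSet n, wt lam n s * f s) / Qfun lam n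

/-- Variance with respect to `P_n`. -/
noncomputable def variancen (lam : ℕ → ℝ) (n : ℕ) (f : (Fin n → ℕ) → ℝ) : ℝ :=
  expectn lam n (fun s => (f s) ^ 2) - (expectn lam n f) ^ 2

namespace VarAux

def ell {n : ℕ} (s : Fin n → ℕ) : ℕ := ∑ j : Fin n, ((j : ℕ) + 1) * s j

def Box (n : ℕ) : Finset (Fin n → ℕ) := Fintype.piFinset fun _ : Fin n => Finset.range (n + 1)

def Om (n m : ℕ) : Finset (Fin n → ℕ) := (Box n).filter (fun s => ell s = m)

noncomputable def QQ (lam : ℕ → ℝ) (n m : ℕ) : ℝ := ∑ s ∈ Om n m, wt lam n s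

noncomputable def QQJ (lam : ℕ → ℝ) (n : ℕ) (j : Fin n) (m : ℕ) : ℝ :=
  ∑ s ∈ (Om n m).filter (fun s => s j = 0), wt lam n s

lemma omega_eq (n : ℕ) : OmegaSet n = Om n n := rfl

lemma le_ell {n : ℕ} (s : Fin n → ℕ) (j : Fin n) : ((j : ℕ) + 1) * s j ≤ ell s :=
  Finset.single_le_sum (f := fun j : Fin n => ((j : ℕ) + 1) * s j)
    (fun _ _ => Nat.zero_le _) (Finset.mem_univ j)

lemma mem_Om {n m : ℕ} (hm : m ≤ n) (s : Fin n → ℕ) : s ∈ Om n m ↔ ell s = m := by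
  unfold Om Box
  simp only [Finset.mem_filter, Fintype.mem_piFinset, Finset.mem_range, and_iff_right_iff_imp]
  intro h j
  have := le_ell s j
  nlinarith [Nat.zero_le ((j : ℕ) * s j)]

def extz {m : ℕ} (n : ℕ) (s : Fin m → ℕ) : Fin n → ℕ :=
  fun k => if h : (k : ℕ) < m then s ⟨k, h⟩ else 0

lemma prod_extz {M : Type*} [CommMonoid M] {n m : ℕ} (hm : m ≤ n) (s : Fin m → ℕ)
    (F : ℕ → ℕ → M) (hF : ∀ k, F k 0 = 1) :
    ∏ k : Fin n, F k (extz n s k) = ∏ k : Fin m, F k (s k) := by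
  have h1 : ∏ k : Fin n, F k (extz n s k) =
      ∏ k ∈ Finset.range n, F k (if h : k < m then s ⟨k, h⟩ else 0) := by
    rw [← Fin.prod_univ_eq_prod_range (fun k => F k (if h : k < m then s ⟨k, h⟩ else 0))]
    rfl
  have h2 : ∏ k : Fin m, F k (s k) =
      ∏ k ∈ Finset.range m, F k (if h : k < m then s ⟨k, h⟩ else 0) := by
    rw [← Fin.prod_univ_eq_prod_range (fun k => F k (if h : k < m then s ⟨k, h⟩ else 0))]
    simp
  rw [h1, h2]
  symm
  apply Finset.prod_subset
  · intro x; simp; omega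
  · intro x _ hx
    simp at hx
    rw [dif_neg (by omega), hF]

lemma ell_extz {n m : ℕ} (hm : m ≤ n) (s : Fin m → ℕ) : ell (extz n s) = ell s := by
  have := prod_extz (M := Multiplicative ℕ) hm s (fun k x => Multiplicative.ofAdd ((k + 1) * x))
    (by intro k; rfl)
  rw [← ofAdd_sum, ← ofAdd_sum] at this
  exact Multiplicative.ofAdd.injective this

lemma wt_extz (lam : ℕ → ℝ) {n m : ℕ} (hm : m ≤ n) (s : Fin m → ℕ) :
    wt lam n (extz n s) = wt lam m s := by
  unfold wt
  exact prod_extz hm s (fun k x => lam (k + 1) ^ x / (x ! : ℝ)) (by simp)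

lemma sum_ext {n m : ℕ} (hm : m ≤ n) (F : (Fin n → ℕ) → ℝ) :
    ∑ s ∈ Om n m, F s = ∑ s ∈ OmegaSet m, F (extz n s) := by
  symm
  have key : ∀ t ∈ Om n m, extz n (fun k : Fin m => t (Fin.castLE hm k)) = t := by
    intro t ht
    rw [mem_Om hm] at ht
    funext k
    unfold extz
    split_ifs with h
    · rfl
    · have := le_ell t k
      rw [ht] at this
      by_contra hne
      have : 1 ≤ t k := by omega
      nlinarith
  refine Finset.sum_bij' (fun s _ => extz n s) (fun t _ => fun k => t (Fin.castLE hm k))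
    ?_ ?_ ?_ ?_ ?_
  · intro s hs
    rw [omega_eq, mem_Om le_rfl] at hs
    rw [mem_Om hm, ell_extz hm, hs]
  · intro t ht
    have h1 := key t ht
    rw [omega_eq, mem_Om le_rfl, ← ell_extz hm, h1]
    exact (mem_Om hm t).1 ht
  · intro s _
    funext k
    simp [extz]
  · intro t ht
    exact key t ht
  · intro s _
    rfl

lemma Qfun_eq (lam : ℕ → ℝ) {n m : ℕ} (hm : m ≤ n) : Qfun lam m = QQ lam n m := by
  unfold QQ
  rw [sum_ext hm]
  simp only [wt_extz lam hm]
  rfl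

lemma Qj_eq (lam : ℕ → ℝ) {n m : ℕ} (hm : m ≤ n) (j : Fin n) :
    Qj lam ((j : ℕ) + 1) m = QQJ lam n j m := by
  unfold QQJ Qj
  rw [Finset.sum_filter, Finset.sum_filter, sum_ext hm]
  apply Finset.sum_congr rfl
  intro s _
  rw [wt_extz lam hm]
  congr 1
  simp only [eq_iff_iff]
  unfold extz
  constructor
  · intro h
    split_ifs with hj
    · exact h ⟨j, hj⟩ rfl
    · rfl
  · intro h i hi
    have hij : (i : ℕ) = j := by omega
    rw [dif_pos (by rw [← hij]; exact i.2)] at h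
    rw [← h]
    congr 1
    exact Fin.ext hij

lemma wt_nonneg (lam : ℕ → ℝ) (hl : ∀ j, 1 ≤ j → 0 ≤ lam j) (n : ℕ) (s : Fin n → ℕ) :
    0 ≤ wt lam n s := by
  unfold wt
  apply Finset.prod_nonneg
  intro j _
  have := hl (j + 1) (by omega)
  positivity

lemma ell_add {n : ℕ} (s : Fin n → ℕ) (i : Fin n) (k : ℕ) :
    ell (s + Pi.single i k) = ell s + ((i : ℕ) + 1) * k := by
  unfold ell
  simp only [Pi.add_apply, mul_add, Finset.sum_add_distrib]
  congr 1
  rw [Finset.sum_eq_single i]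
  · simp
  · intro b _ hb
    simp [Pi.single_eq_of_ne hb]
  · simp

lemma wt_split (lam : ℕ → ℝ) {n : ℕ} (s : Fin n → ℕ) (i : Fin n) :
    wt lam n s = lam ((i : ℕ) + 1) ^ (s i) / ((s i)! : ℝ) *
      ∏ j ∈ Finset.univ.erase i, lam ((j : ℕ) + 1) ^ (s j) / ((s j)! : ℝ) := by
  unfold wt
  rw [← Finset.mul_prod_erase _ _ (Finset.mem_univ i)]

lemma wt_add (lam : ℕ → ℝ) {n : ℕ} (s : Fin n → ℕ) (i : Fin n) :
    wt lam n (s + Pi.single i 1) * ((s i + 1 : ℕ) : ℝ) = lam ((i : ℕ) + 1) * wt lam n s := by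
  rw [wt_split lam _ i, wt_split lam s i]
  have : ∏ j ∈ Finset.univ.erase i,
      lam ((j : ℕ) + 1) ^ ((s + Pi.single i 1 : Fin n → ℕ) j) / (((s + Pi.single i 1 : Fin n → ℕ) j)! : ℝ) =
      ∏ j ∈ Finset.univ.erase i, lam ((j : ℕ) + 1) ^ (s j) / ((s j)! : ℝ) := by
    apply Finset.prod_congr rfl
    intro j hj
    have : j ≠ i := (Finset.mem_erase.1 hj).1
    simp [Pi.single_eq_of_ne this]
  rw [this]
  simp only [Pi.add_apply, Pi.single_eq_same, Nat.factorial_succ, pow_succ]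
  have h1 : ((s i)! : ℝ) ≠ 0 := by positivity
  push_cast
  have h2 : ((s i : ℝ) + 1) ≠ 0 := by positivity
  field_simp

lemma wt_addk (lam : ℕ → ℝ) {n : ℕ} (s : Fin n → ℕ) (i : Fin n) (k : ℕ) (h0 : s i = 0) :
    wt lam n (s + Pi.single i k) = lam ((i : ℕ) + 1) ^ k / (k ! : ℝ) * wt lam n s := by
  rw [wt_split lam _ i, wt_split lam s i]
  have : ∏ j ∈ Finset.univ.erase i,
      lam ((j : ℕ) + 1) ^ ((s + Pi.single i k : Fin n → ℕ) j) / (((s + Pi.single i k : Fin n → ℕ) j)! : ℝ) =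
      ∏ j ∈ Finset.univ.erase i, lam ((j : ℕ) + 1) ^ (s j) / ((s j)! : ℝ) := by
    apply Finset.prod_congr rfl
    intro j hj
    have : j ≠ i := (Finset.mem_erase.1 hj).1
    simp [Pi.single_eq_of_ne this]
  rw [this]
  simp [h0]

/-- size-biasing shift -/
lemma shift (lam : ℕ → ℝ) {n m : ℕ} (hm : m ≤ n) (i : Fin n) (f : (Fin n → ℕ) → ℝ) :
    ∑ s ∈ Om n m, wt lam n s * (s i : ℝ) * f s =
      if (i : ℕ) + 1 ≤ m then
        lam ((i : ℕ) + 1) * ∑ s ∈ Om n (m - ((i : ℕ) + 1)), wt lam n s * f (s + Pi.single i 1)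
      else 0 := by
  split_ifs with hi
  · rw [Finset.mul_sum]
    have h1 : ∑ s ∈ Om n m, wt lam n s * (s i : ℝ) * f s =
        ∑ s ∈ (Om n m).filter (fun s => s i ≠ 0), wt lam n s * (s i : ℝ) * f s := by
      rw [Finset.sum_filter]
      apply Finset.sum_congr rfl
      intro s _
      split_ifs with h
      · rfl
      · have : s i = 0 := by simpa using h
        simp [this]
    rw [h1]
    symm
    have inv : ∀ s : Fin n → ℕ, s i ≠ 0 → s - Pi.single i 1 + Pi.single i 1 = s := by
      intro s hs
      funext k
      by_cases hk : k = i
      · subst hk; simp; omega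
      · simp [Pi.single_eq_of_ne hk]
    refine Finset.sum_bij' (fun s _ => s + Pi.single i 1) (fun s _ => s - Pi.single i 1)
      ?_ ?_ ?_ ?_ ?_
    · intro s hs
      rw [mem_Om (by omega)] at hs
      simp only [Finset.mem_filter, mem_Om hm, ell_add]
      constructor
      · omega
      · simp
    · intro s hs
      simp only [Finset.mem_filter, mem_Om hm] at hs
      rw [mem_Om (by omega)]
      have := ell_add (s - Pi.single i 1) i 1
      rw [inv s hs.2] at this
      omega
    · intro s _
      funext k
      simp
    · intro s hs
      exact inv s (Finset.mem_filter.1 hs).2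
    · intro s _
      have := wt_add lam s i
      rw [← mul_assoc, ← this]
      simp
  · apply Finset.sum_eq_zero
    intro s hs
    rw [mem_Om hm] at hs
    have := le_ell s i
    have h0 : s i = 0 := by
      by_contra h
      have : 1 ≤ s i := by omega
      nlinarith
    simp [h0]

lemma marg (lam : ℕ → ℝ) {n : ℕ} (j : Fin n) (ph : ℕ → ℝ) :
    ∑ s ∈ Om n n, wt lam n s * ph (s j) =
      ∑ k ∈ Finset.range (n + 1), if ((j : ℕ) + 1) * k ≤ n then
        lam ((j : ℕ) + 1) ^ k / (k ! : ℝ) * ph k * QQJ lam n j (n - ((j : ℕ) + 1) * k) else 0 := by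
  rw [← Finset.sum_fiberwise_of_maps_to (g := fun s : Fin n → ℕ => s j)
    (t := Finset.range (n + 1))]
  swap
  · intro s hs
    have : s ∈ Box n := (Finset.mem_filter.1 hs).1
    exact Fintype.mem_piFinset.1 this j
  apply Finset.sum_congr rfl
  intro k _
  split_ifs with hk
  · unfold QQJ
    rw [Finset.mul_sum]
    symm
    have inv : ∀ s : Fin n → ℕ, s j = k → s - Pi.single j k + Pi.single j k = s := by
      intro s hs
      funext l
      by_cases hk : l = j
      · subst hk; simp [hs]
      · simp [Pi.single_eq_of_ne hk]
    refine Finset.sum_bij' (fun s _ => s + Pi.single j k) (fun s _ => s - Pi.single j k)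
      ?_ ?_ ?_ ?_ ?_
    · intro s hs
      simp only [Finset.mem_filter, mem_Om (Nat.sub_le _ _)] at hs
      simp only [Finset.mem_filter, mem_Om le_rfl, ell_add]
      constructor
      · omega
      · simp [hs.2]
    · intro s hs
      simp only [Finset.mem_filter, mem_Om le_rfl] at hs
      simp only [Finset.mem_filter, mem_Om (Nat.sub_le _ _)]
      have := ell_add (s - Pi.single j k) j k
      rw [inv s hs.2] at this
      constructor
      · omega
      · simp [hs.2]
    · intro s _
      funext l
      simp
    · intro s hs
      exact inv s (Finset.mem_filter.1 hs).2
    · intro s hs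
      have h0 := (Finset.mem_filter.1 hs).2
      rw [wt_addk lam s j k h0]
      simp [h0]
      ring
  · apply Finset.sum_eq_zero
    intro s hs
    simp only [Finset.mem_filter, mem_Om le_rfl] at hs
    have := le_ell s j
    rw [hs.1, hs.2] at this
    exact absurd this hk

lemma box_prod {n : ℕ} (F : Fin n → ℕ → ℝ) :
    ∑ s ∈ Box n, ∏ l, F l (s l) = ∏ l, ∑ k ∈ Finset.range (n + 1), F l k := by
  unfold Box
  rw [Finset.prod_univ_sum]

lemma one_le_Z {n : ℕ} (p : Fin n → ℕ → ℝ) (hp : ∀ l k, 0 ≤ p l k) (hp0 : ∀ l, p l 0 = 1)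
    (l : Fin n) : 1 ≤ ∑ k ∈ Finset.range (n + 1), p l k := by
  rw [← hp0 l]
  exact Finset.single_le_sum (f := fun k => p l k) (fun k _ => hp l k) (by simp)

lemma single_prod {n : ℕ} (p : Fin n → ℕ → ℝ) (i : Fin n) (v : ℕ → ℝ) :
    ∑ s ∈ Box n, (∏ l, p l (s l)) * v (s i) =
      (∑ k ∈ Finset.range (n + 1), p i k * v k) *
        ∏ l ∈ Finset.univ.erase i, ∑ k ∈ Finset.range (n + 1), p l k := by
  have h := box_prod (fun l k => p l k * (if l = i then v k else 1))
  have h1 : ∀ s : Fin n → ℕ, ∏ l, (p l (s l) * (if l = i then v (s l) else 1)) =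
      (∏ l, p l (s l)) * v (s i) := by
    intro s
    rw [Finset.prod_mul_distrib, Finset.prod_ite_eq']
    simp
  simp only [h1] at h
  rw [h, ← Finset.mul_prod_erase _ _ (Finset.mem_univ i)]
  congr 1
  · simp
  · apply Finset.prod_congr rfl
    intro l hl
    simp [(Finset.mem_erase.1 hl).1]

lemma single_prod_le {n : ℕ} (p : Fin n → ℕ → ℝ) (hp : ∀ l k, 0 ≤ p l k) (hp0 : ∀ l, p l 0 = 1)
    (i : Fin n) (v : ℕ → ℝ) (hv : ∀ k, 0 ≤ v k) :
    ∑ s ∈ Box n, (∏ l, p l (s l)) * v (s i) ≤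
      (∏ l, ∑ k ∈ Finset.range (n + 1), p l k) *
        ∑ k ∈ Finset.range (n + 1), p i k * v k := by
  rw [single_prod, mul_comm]
  apply mul_le_mul_of_nonneg_right
  · rw [← Finset.mul_prod_erase _ _ (Finset.mem_univ i)]
    apply le_mul_of_one_le_left
    · exact Finset.prod_nonneg fun l _ => le_trans zero_le_one (one_le_Z p hp hp0 l)
    · exact one_le_Z p hp hp0 i
  · exact Finset.sum_nonneg fun k _ => mul_nonneg (hp i k) (hv k)

lemma pair_prod {n : ℕ} (p : Fin n → ℕ → ℝ) (i j : Fin n) (hij : i ≠ j) (v w : ℕ → ℝ)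
    (hv : ∑ k ∈ Finset.range (n + 1), p i k * v k = 0) :
    ∑ s ∈ Box n, (∏ l, p l (s l)) * (v (s i) * w (s j)) = 0 := by
  have h := box_prod (fun l k => p l k * (if l = i then v k else 1) * (if l = j then w k else 1))
  have h1 : ∀ s : Fin n → ℕ, ∏ l, (p l (s l) * (if l = i then v (s l) else 1) *
      (if l = j then w (s l) else 1)) = (∏ l, p l (s l)) * (v (s i) * w (s j)) := by
    intro s
    rw [Finset.prod_mul_distrib, Finset.prod_mul_distrib, Finset.prod_ite_eq', Finset.prod_ite_eq']
    simp [mul_assoc]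
  simp only [h1] at h
  rw [h]
  apply Finset.prod_eq_zero (Finset.mem_univ i)
  simpa [hij] using hv

lemma second_prod {n : ℕ} (p g : Fin n → ℕ → ℝ) (hp : ∀ l k, 0 ≤ p l k) (hp0 : ∀ l, p l 0 = 1)
    (hg : ∀ l k, 0 ≤ g l k) :
    ∑ s ∈ Box n, (∏ l, p l (s l)) * (∑ l, g l (s l)) ≤
      (∏ l, ∑ k ∈ Finset.range (n + 1), p l k) *
        ∑ l, ∑ k ∈ Finset.range (n + 1), p l k * g l k := by
  simp only [Finset.mul_sum]
  rw [Finset.sum_comm]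
  apply Finset.sum_le_sum
  intro i _
  rw [← Finset.mul_sum]
  exact single_prod_le p hp hp0 i (g i) (hg i)

lemma var_prod {n : ℕ} (p u : Fin n → ℕ → ℝ) (hp : ∀ l k, 0 ≤ p l k) (hp0 : ∀ l, p l 0 = 1)
    (hu : ∀ l, ∑ k ∈ Finset.range (n + 1), p l k * u l k = 0) :
    ∑ s ∈ Box n, (∏ l, p l (s l)) * (∑ l, u l (s l)) ^ 2 ≤
      (∏ l, ∑ k ∈ Finset.range (n + 1), p l k) *
        ∑ l, ∑ k ∈ Finset.range (n + 1), p l k * u l k ^ 2 := by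
  refine le_trans (le_of_eq ?_) (second_prod p (fun l k => u l k ^ 2) hp hp0
    (fun _ _ => sq_nonneg _))
  simp only [sq, Finset.sum_mul_sum]
  simp only [Finset.mul_sum]
  rw [Finset.sum_comm, Finset.sum_comm (s := Box n)]
  apply Finset.sum_congr rfl
  intro i _
  rw [Finset.sum_comm, Finset.sum_eq_single i]
  · intro j _ hj
    exact pair_prod p i j hj.symm (u i) (u j) (hu i)
  · simp

/-- the variance of a sum of independent variables -/
lemma var_indep {n : ℕ} (p g : Fin n → ℕ → ℝ) (hp : ∀ l k, 0 ≤ p l k) (hp0 : ∀ l, p l 0 = 1) :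
    ∃ a : ℝ, ∑ s ∈ Box n, (∏ l, p l (s l)) * (∑ l, g l (s l) - a) ^ 2 ≤
      (∏ l, ∑ k ∈ Finset.range (n + 1), p l k) *
        ∑ l, ∑ k ∈ Finset.range (n + 1), p l k * g l k ^ 2 := by
  set Z : Fin n → ℝ := fun l => ∑ k ∈ Finset.range (n + 1), p l k with hZ
  set mu : Fin n → ℝ := fun l => (∑ k ∈ Finset.range (n + 1), p l k * g l k) / Z l with hmu
  have hZ1 : ∀ l, 1 ≤ Z l := one_le_Z p hp hp0
  have hmuZ : ∀ l, ∑ k ∈ Finset.range (n + 1), p l k * g l k = mu l * Z l := by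
    intro l
    have : Z l ≠ 0 := by linarith [hZ1 l]
    simp only [hmu]
    field_simp
  refine ⟨∑ l, mu l, ?_⟩
  have := var_prod p (fun l k => g l k - mu l) hp hp0 (by
    intro l
    simp only [mul_sub, Finset.sum_sub_distrib, ← Finset.sum_mul]
    rw [hmuZ l]
    simp only [hZ]
    ring)
  simp only [Finset.sum_sub_distrib] at this
  refine le_trans this ?_
  apply mul_le_mul_of_nonneg_left
  · apply Finset.sum_le_sum
    intro l _
    have e : ∑ k ∈ Finset.range (n + 1), p l k * (g l k - mu l) ^ 2 =
        ∑ k ∈ Finset.range (n + 1), p l k * g l k ^ 2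
        - 2 * mu l * ∑ k ∈ Finset.range (n + 1), p l k * g l k + mu l ^ 2 * Z l := by
      simp only [hZ, Finset.mul_sum]
      rw [← Finset.sum_sub_distrib, ← Finset.sum_add_distrib]
      apply Finset.sum_congr rfl
      intro k _
      ring
    rw [e, hmuZ l]
    have : 0 ≤ mu l ^ 2 * Z l := mul_nonneg (sq_nonneg _) (by linarith [hZ1 l])
    nlinarith
  · exact Finset.prod_nonneg fun l _ => le_trans zero_le_one (hZ1 l)

lemma sum_Icc_fin (f : ℕ → ℝ) (n : ℕ) :
    ∑ j ∈ Finset.Icc 1 n, f j = ∑ i : Fin n, f ((i : ℕ) + 1) := by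
  rw [Fin.sum_univ_eq_sum_range (fun i => f (i + 1)) n, Finset.range_eq_Ico,
    Finset.sum_Ico_add' f 0 n 1]
  rfl

noncomputable def SS (lam : ℕ → ℝ) (n : ℕ) : ℝ := ∑ j ∈ Finset.Icc 1 n, lam j

noncomputable def pp (lam : ℕ → ℝ) (n : ℕ) (l : Fin n) (k : ℕ) : ℝ :=
  lam ((l : ℕ) + 1) ^ k / (k ! : ℝ)

lemma wt_pp (lam : ℕ → ℝ) (n : ℕ) (s : Fin n → ℕ) : wt lam n s = ∏ l, pp lam n l (s l) := rfl

lemma pp_nonneg (lam : ℕ → ℝ) (hl : ∀ j, 1 ≤ j → 0 ≤ lam j) (n : ℕ) (l : Fin n) (k : ℕ) :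
    0 ≤ pp lam n l k := by
  unfold pp
  have := hl (l + 1) (by omega)
  positivity

lemma prodZ_le (lam : ℕ → ℝ) (hl : ∀ j, 1 ≤ j → 0 ≤ lam j) (n : ℕ) :
    ∏ l, ∑ k ∈ Finset.range (n + 1), pp lam n l k ≤ Real.exp (SS lam n) := by
  unfold SS
  rw [sum_Icc_fin, Real.exp_sum]
  apply Finset.prod_le_prod
  · intro l _
    exact Finset.sum_nonneg fun k _ => pp_nonneg lam hl n l k
  · intro l _
    exact Real.sum_le_exp_of_nonneg (hl _ (by omega)) _

lemma sum_om_le (lam : ℕ → ℝ) (hl : ∀ j, 1 ≤ j → 0 ≤ lam j) (n : ℕ)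
    (f : (Fin n → ℕ) → ℝ) (hf : ∀ s, 0 ≤ f s) :
    ∑ i : Fin n, ∑ s ∈ Om n (n - ((i : ℕ) + 1)), wt lam n s * f s ≤
      ∑ s ∈ Box n, wt lam n s * f s := by
  rw [← Finset.sum_biUnion]
  · apply Finset.sum_le_sum_of_subset_of_nonneg
    · intro s hs
      simp only [Finset.mem_biUnion] at hs
      obtain ⟨i, _, h⟩ := hs
      exact (Finset.mem_filter.1 h).1
    · intro s _ _
      exact mul_nonneg (wt_nonneg lam hl n s) (hf s)
  · intro i _ j _ hij
    simp only [Function.onFun]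
    rw [Finset.disjoint_left]
    intro s h1 h2
    have e1 := (Finset.mem_filter.1 h1).2
    have e2 := (Finset.mem_filter.1 h2).2
    apply hij
    apply Fin.ext
    omega

lemma sizebias_le (lam : ℕ → ℝ) (hl : ∀ j, 1 ≤ j → 0 ≤ lam j) (Θ : ℝ) (hΘ : 0 < Θ)
    (hT : ∀ j : ℕ, 1 ≤ j → (j : ℝ) * lam j ≤ Θ) (n : ℕ)
    (f : (Fin n → ℕ) → ℝ) (hf : ∀ s, 0 ≤ f s) :
    ∑ i : Fin n, (((i : ℕ) + 1 : ℕ) : ℝ) *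
      ∑ s ∈ Om n n, wt lam n s * (s i : ℝ) * f (s - Pi.single i 1) ≤
      Θ * ∑ s ∈ Box n, wt lam n s * f s := by
  refine le_trans ?_ (mul_le_mul_of_nonneg_left (sum_om_le lam hl n f hf) hΘ.le)
  rw [Finset.mul_sum]
  apply Finset.sum_le_sum
  intro i _
  have e : ∑ s ∈ Om n n, wt lam n s * (s i : ℝ) * f (s - Pi.single i 1) = _ :=
    shift lam le_rfl i (fun s : Fin n → ℕ => f (s - Pi.single i 1))
  rw [e, if_pos (by omega), ← mul_assoc]
  have : ∀ s : Fin n → ℕ, s + Pi.single i 1 - Pi.single i 1 = s := by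
    intro s; funext k; simp
  simp only [this]
  apply mul_le_mul_of_nonneg_right (hT _ (by omega))
  exact Finset.sum_nonneg fun s _ => mul_nonneg (wt_nonneg lam hl n s) (hf s)

lemma sum_ell (lam : ℕ → ℝ) (n : ℕ) (f : (Fin n → ℕ) → ℝ) :
    (n : ℝ) * ∑ s ∈ Om n n, wt lam n s * f s =
      ∑ i : Fin n, (((i : ℕ) + 1 : ℕ) : ℝ) * ∑ s ∈ Om n n, wt lam n s * (s i : ℝ) * f s := by
  simp only [Finset.mul_sum]
  rw [Finset.sum_comm]
  apply Finset.sum_congr rfl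
  intro s hs
  rw [mem_Om le_rfl] at hs
  have : (n : ℝ) = ∑ i : Fin n, (((i : ℕ) + 1 : ℕ) : ℝ) * (s i : ℝ) := by
    conv_lhs => rw [← hs]
    unfold ell
    push_cast
    rfl
  conv_lhs => rw [this]
  rw [Finset.sum_mul]
  apply Finset.sum_congr rfl
  intro i _
  ring

lemma Q_upper (lam : ℕ → ℝ) (hl : ∀ j, 1 ≤ j → 0 ≤ lam j) (Θ : ℝ) (hΘ : 0 < Θ)
    (hT : ∀ j : ℕ, 1 ≤ j → (j : ℝ) * lam j ≤ Θ) (n : ℕ) :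
    (n : ℝ) * Qfun lam n ≤ Θ * Real.exp (SS lam n) := by
  have h1 := sum_ell lam n (fun _ => 1)
  have h2 := sizebias_le lam hl Θ hΘ hT n (fun _ => 1) (fun _ => zero_le_one)
  rw [← h1] at h2
  simp only [mul_one] at h2
  refine le_trans h2 (mul_le_mul_of_nonneg_left ?_ hΘ.le)
  simp only [wt_pp]
  rw [box_prod]
  exact prodZ_le lam hl n

lemma Qfun_nonneg (lam : ℕ → ℝ) (hl : ∀ j, 1 ≤ j → 0 ≤ lam j) (n : ℕ) : 0 ≤ Qfun lam n :=
  Finset.sum_nonneg fun s _ => wt_nonneg lam hl n s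

lemma SS_mono (lam : ℕ → ℝ) (hl : ∀ j, 1 ≤ j → 0 ≤ lam j) {m n : ℕ} (h : m ≤ n) :
    SS lam m ≤ SS lam n := by
  unfold SS
  apply Finset.sum_le_sum_of_subset_of_nonneg
  · exact Finset.Icc_subset_Icc le_rfl h
  · intro i hi _
    exact hl i (Finset.mem_Icc.1 hi).1

lemma Qj_split (lam : ℕ → ℝ) (hl : ∀ j, 1 ≤ j → 0 ≤ lam j) (j m : ℕ) (hj : 1 ≤ j) (hjm : j ≤ m) :
    Qfun lam m ≤ Qj lam j m + lam j * Qfun lam (m - j) := by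
  obtain ⟨i, rfl⟩ : ∃ i, j = i + 1 := ⟨j - 1, by omega⟩
  set I : Fin m := ⟨i, by omega⟩ with hI
  have e1 : Qj lam (i + 1) m = QQJ lam m I m := Qj_eq lam le_rfl I
  rw [e1, Qfun_eq lam (le_refl m), Qfun_eq lam (Nat.sub_le m (i + 1))]
  have h2 := shift lam (le_refl m) I (fun _ => 1)
  rw [if_pos (by simpa [hI] using hjm)] at h2
  simp only [mul_one] at h2
  unfold QQ QQJ
  have h3 : lam (i + 1) * ∑ s ∈ Om m (m - (i + 1)), wt lam m s =
      ∑ s ∈ Om m m, wt lam m s * (s I : ℝ) := h2.symm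
  rw [h3, Finset.sum_filter, ← Finset.sum_add_distrib]
  apply Finset.sum_le_sum
  intro s _
  have hw := wt_nonneg lam hl m s
  split_ifs with h
  · simp [h]
  · have : (1 : ℝ) ≤ (s I : ℝ) := by exact_mod_cast Nat.one_le_iff_ne_zero.2 h
    nlinarith

lemma Qj_lower (lam : ℕ → ℝ) (hl : ∀ j, 1 ≤ j → 0 ≤ lam j) (Θ θ' : ℝ) (hΘ : 0 < Θ) (hθ' : 0 < θ')
    (hT : ∀ j : ℕ, 1 ≤ j → (j : ℝ) * lam j ≤ Θ)
    (hQ : ∀ n : ℕ, 1 ≤ n → θ' * Real.exp (SS lam n) ≤ n * Qfun lam n)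
    (j m : ℕ) (hj : 1 ≤ j) (hjm : 2 * j ≤ m) (hbig : 4 * Θ ^ 2 ≤ θ' * j) :
    Qfun lam m ≤ 2 * Qj lam j m := by
  have h1 := Qj_split lam hl j m hj (by omega)
  have h2 := Q_upper lam hl Θ hΘ hT (m - j)
  have h3 : Real.exp (SS lam (m - j)) ≤ Real.exp (SS lam m) :=
    Real.exp_le_exp.2 (SS_mono lam hl (Nat.sub_le _ _))
  have h4 := hQ m (by omega)
  have h5 := hT j hj
  have hj0 : (1 : ℝ) ≤ j := by exact_mod_cast hj
  have hl0 := hl j hj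
  have hd1 : (1 : ℝ) ≤ ((m - j : ℕ) : ℝ) := by
    have : 1 ≤ m - j := by omega
    exact_mod_cast this
  have hd2 : (m : ℝ) ≤ 2 * ((m - j : ℕ) : ℝ) := by
    have : m ≤ 2 * (m - j) := by omega
    exact_mod_cast this
  have hQm := Qfun_nonneg lam hl m
  have hQd := Qfun_nonneg lam hl (m - j)
  set d : ℝ := ((m - j : ℕ) : ℝ)
  set A := Qfun lam m
  set B := Qfun lam (m - j)
  have h6 : θ' * (d * B) ≤ Θ * (2 * d * A) := by
    calc θ' * (d * B) ≤ θ' * (Θ * Real.exp (SS lam m)) := by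
          apply mul_le_mul_of_nonneg_left _ hθ'.le
          exact h2.trans (mul_le_mul_of_nonneg_left h3 hΘ.le)
      _ = Θ * (θ' * Real.exp (SS lam m)) := by ring
      _ ≤ Θ * (m * A) := mul_le_mul_of_nonneg_left h4 hΘ.le
      _ ≤ Θ * (2 * d * A) := by
          apply mul_le_mul_of_nonneg_left _ hΘ.le
          exact mul_le_mul_of_nonneg_right hd2 hQm
  have h7 : θ' * B ≤ 2 * Θ * A := by
    have : d * (θ' * B) ≤ d * (2 * Θ * A) := by linarith
    exact le_of_mul_le_mul_left this (by linarith)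
  have h8 : θ' * j * (lam j * B) ≤ θ' * j * (A / 2) := by
    calc θ' * j * (lam j * B) = (j * lam j) * (θ' * B) := by ring
      _ ≤ Θ * (2 * Θ * A) := by
          apply mul_le_mul h5 h7 (by positivity) hΘ.le
      _ = (4 * Θ ^ 2) * (A / 2) := by ring
      _ ≤ θ' * j * (A / 2) := mul_le_mul_of_nonneg_right hbig (by positivity)
  have h9 : lam j * B ≤ A / 2 := le_of_mul_le_mul_left h8 (by positivity)
  linarith

lemma SS_diff (lam : ℕ → ℝ) (Θ : ℝ) (hΘ : 0 < Θ)
    (hT : ∀ j : ℕ, 1 ≤ j → (j : ℝ) * lam j ≤ Θ) {m n : ℕ} (hmn : m ≤ n) (h : n ≤ 2 * m)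
    (hm : 1 ≤ m) : SS lam n ≤ SS lam m + Θ := by
  have e : ∀ k, SS lam k = ∑ j ∈ Finset.Ioc 0 k, lam j := fun k => rfl
  rw [e, e, ← Finset.sum_Ioc_consecutive lam (Nat.zero_le m) hmn]
  have hm0 : (1 : ℝ) ≤ m := by exact_mod_cast hm
  have : ∑ j ∈ Finset.Ioc m n, lam j ≤ (Finset.Ioc m n).card • (Θ / m) := by
    apply Finset.sum_le_card_nsmul
    intro j hj
    have hj' := (Finset.mem_Ioc.1 hj).1
    have hjm : (m : ℝ) ≤ j := by exact_mod_cast hj'.le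
    have h1 := hT j (by omega)
    have : lam j ≤ Θ / j := by
      rw [le_div_iff₀ (by linarith)]; linarith
    refine this.trans ?_
    gcongr
  have h2 : (Finset.Ioc m n).card • (Θ / m) ≤ Θ := by
    rw [Nat.card_Ioc, nsmul_eq_mul]
    have : ((n - m : ℕ) : ℝ) ≤ m := by
      have : n - m ≤ m := by omega
      exact_mod_cast this
    calc ((n - m : ℕ) : ℝ) * (Θ / m) ≤ m * (Θ / m) := by gcongr
      _ = Θ := by field_simp
  linarith

lemma Q_ratio (lam : ℕ → ℝ) (hl : ∀ j, 1 ≤ j → 0 ≤ lam j) (Θ θ' : ℝ) (hΘ : 0 < Θ) (hθ' : 0 < θ')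
    (hT : ∀ j : ℕ, 1 ≤ j → (j : ℝ) * lam j ≤ Θ)
    (hQ : ∀ n : ℕ, 1 ≤ n → θ' * Real.exp (SS lam n) ≤ n * Qfun lam n)
    {m n : ℕ} (hmn : m ≤ n) (h : n ≤ 2 * m) (hm : 1 ≤ m) :
    θ' * Qfun lam n ≤ Θ * Real.exp Θ * Qfun lam m := by
  have h1 := Q_upper lam hl Θ hΘ hT n
  have h2 : Real.exp (SS lam n) ≤ Real.exp (SS lam m) * Real.exp Θ := by
    rw [← Real.exp_add]
    exact Real.exp_le_exp.2 (SS_diff lam Θ hΘ hT hmn h hm)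
  have h3 := hQ m hm
  have hQm := Qfun_nonneg lam hl m
  have hn : (1 : ℝ) ≤ n := by exact_mod_cast (hm.trans hmn)
  have hmn' : (m : ℝ) ≤ n := by exact_mod_cast hmn
  have : (n : ℝ) * (θ' * Qfun lam n) ≤ n * (Θ * Real.exp Θ * Qfun lam m) := by
    calc (n : ℝ) * (θ' * Qfun lam n) = θ' * (n * Qfun lam n) := by ring
      _ ≤ θ' * (Θ * (Real.exp (SS lam m) * Real.exp Θ)) := by
          apply mul_le_mul_of_nonneg_left _ hθ'.le
          exact h1.trans (mul_le_mul_of_nonneg_left h2 hΘ.le)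
      _ = Θ * Real.exp Θ * (θ' * Real.exp (SS lam m)) := by ring
      _ ≤ Θ * Real.exp Θ * (m * Qfun lam m) := by gcongr
      _ ≤ Θ * Real.exp Θ * (n * Qfun lam m) := by gcongr
      _ = _ := by ring
  exact le_of_mul_le_mul_left this (by linarith)

noncomputable def WW (lam : ℕ → ℝ) (n : ℕ) (g : Fin n → ℕ → ℝ) : ℝ :=
  ∑ s ∈ Om n n, wt lam n s * ∑ j, g j (s j) ^ 2

lemma WW_eq (lam : ℕ → ℝ) (n : ℕ) (g : Fin n → ℕ → ℝ) :
    WW lam n g = ∑ j : Fin n, ∑ k ∈ Finset.range (n + 1), if ((j : ℕ) + 1) * k ≤ n then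
        pp lam n j k * g j k ^ 2 * Qj lam ((j : ℕ) + 1) (n - ((j : ℕ) + 1) * k) else 0 := by
  unfold WW
  simp only [Finset.mul_sum]
  rw [Finset.sum_comm]
  apply Finset.sum_congr rfl
  intro j _
  rw [marg lam j (fun k => g j k ^ 2)]
  apply Finset.sum_congr rfl
  intro k _
  rw [Qj_eq lam (Nat.sub_le _ _) j]
  rfl

lemma Qj_nonneg (lam : ℕ → ℝ) (hl : ∀ j, 1 ≤ j → 0 ≤ lam j) (j n : ℕ) : 0 ≤ Qj lam j n :=
  Finset.sum_nonneg fun s _ => wt_nonneg lam hl n s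

/-- comparison of the independent second moments with the conditioned ones -/
lemma D_le (lam : ℕ → ℝ) (hl : ∀ j, 1 ≤ j → 0 ≤ lam j) (Θ θ' : ℝ) (hΘ : 0 < Θ) (hθ' : 0 < θ')
    (hT : ∀ j : ℕ, 1 ≤ j → (j : ℝ) * lam j ≤ Θ)
    (hQ : ∀ n : ℕ, 1 ≤ n → θ' * Real.exp (SS lam n) ≤ n * Qfun lam n)
    (n : ℕ) (hn : 1 ≤ n) (g : Fin n → ℕ → ℝ)
    (hg : ∀ j k, g j k ≠ 0 → 4 * Θ ^ 2 ≤ θ' * (((j : ℕ) + 1 : ℕ) : ℝ) ∧ 1 ≤ k ∧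
      3 * (((j : ℕ) + 1) * k) ≤ n) :
    θ' * (Qfun lam n * ∑ l, ∑ k ∈ Finset.range (n + 1), pp lam n l k * g l k ^ 2) ≤
      2 * Θ * Real.exp Θ * WW lam n g := by
  rw [WW_eq]
  simp only [Finset.mul_sum]
  apply Finset.sum_le_sum
  intro j _
  apply Finset.sum_le_sum
  intro k _
  by_cases h0 : g j k = 0
  · simp [h0]
  obtain ⟨h1, h2, h3⟩ := hg j k h0
  rw [if_pos (by omega)]
  have hjk : (j : ℕ) + 1 ≤ ((j : ℕ) + 1) * k := Nat.le_mul_of_pos_right _ h2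
  set m := n - ((j : ℕ) + 1) * k with hm
  have a1 := Q_ratio lam hl Θ θ' hΘ hθ' hT hQ (m := m) (n := n) (by omega) (by omega) (by omega)
  have a2 := Qj_lower lam hl Θ θ' hΘ hθ' hT hQ ((j : ℕ) + 1) m (by omega) (by omega) h1
  have a3 : θ' * Qfun lam n ≤ 2 * Θ * Real.exp Θ * Qj lam ((j : ℕ) + 1) m := by
    calc θ' * Qfun lam n ≤ Θ * Real.exp Θ * Qfun lam m := a1
      _ ≤ Θ * Real.exp Θ * (2 * Qj lam ((j : ℕ) + 1) m) := by gcongr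
      _ = _ := by ring
  have hp := pp_nonneg lam hl n j k
  have := mul_le_mul_of_nonneg_right a3 (mul_nonneg hp (sq_nonneg (g j k)))
  linarith

lemma sum_sub_single {n : ℕ} (g : Fin n → ℕ → ℝ) (s : Fin n → ℕ) (i : Fin n) :
    ∑ j, g j (s j) = ∑ j, g j ((s - Pi.single i 1 : Fin n → ℕ) j) + (g i (s i) - g i (s i - 1)) := by
  have h1 : ∀ j, j ≠ i → (s - Pi.single i 1 : Fin n → ℕ) j = s j := by
    intro j hj
    simp [Pi.single_eq_of_ne hj]
  have h2 : (s - Pi.single i 1 : Fin n → ℕ) i = s i - 1 := by simp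
  generalize (s - Pi.single i 1 : Fin n → ℕ) = t at h1 h2 ⊢
  rw [← Finset.add_sum_erase _ _ (Finset.mem_univ i),
    ← Finset.add_sum_erase _ (fun j => g j (t j)) (Finset.mem_univ i)]
  have : ∑ j ∈ Finset.univ.erase i, g j (t j) = ∑ j ∈ Finset.univ.erase i, g j (s j) := by
    apply Finset.sum_congr rfl
    intro j hj
    rw [h1 j (Finset.mem_erase.1 hj).1]
  rw [this, h2]
  ring

lemma small_part (lam : ℕ → ℝ) (hl : ∀ j, 1 ≤ j → 0 ≤ lam j) (Θ θ' : ℝ) (hΘ : 0 < Θ)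
    (hθ' : 0 < θ')
    (hT : ∀ j : ℕ, 1 ≤ j → (j : ℝ) * lam j ≤ Θ)
    (hQ : ∀ n : ℕ, 1 ≤ n → θ' * Real.exp (SS lam n) ≤ n * Qfun lam n)
    (n : ℕ) (hn : 1 ≤ n) (g : Fin n → ℕ → ℝ)
    (hg : ∀ j k, g j k ≠ 0 → 4 * Θ ^ 2 ≤ θ' * (((j : ℕ) + 1 : ℕ) : ℝ) ∧ 1 ≤ k ∧
      3 * (((j : ℕ) + 1) * k) ≤ n) :
    ∃ a : ℝ, ∑ s ∈ Om n n, wt lam n s * (∑ j, g j (s j) - a) ^ 2 ≤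
      (3 + 12 * Θ ^ 2 * Real.exp Θ / θ' ^ 2) * WW lam n g := by
  have hp := pp_nonneg lam hl n
  have hp0 : ∀ l, pp lam n l 0 = 1 := by intro l; simp [pp]
  obtain ⟨a, ha⟩ := var_indep (pp lam n) g hp hp0
  have hb := second_prod (pp lam n) (fun l k => g l k ^ 2) hp hp0 (fun _ _ => sq_nonneg _)
  refine ⟨a, ?_⟩
  set D := ∑ l, ∑ k ∈ Finset.range (n + 1), pp lam n l k * g l k ^ 2 with hD
  have hD0 : 0 ≤ D := Finset.sum_nonneg fun l _ => Finset.sum_nonneg fun k _ =>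
    mul_nonneg (hp l k) (sq_nonneg _)
  have hZ := mul_le_mul_of_nonneg_right (prodZ_le lam hl n) hD0
  have hn0 : (1 : ℝ) ≤ n := by exact_mod_cast hn
  set f : (Fin n → ℕ) → ℝ := fun s => (∑ j, g j (s j) - a) ^ 2 + ∑ j, g j (s j) ^ 2 with hf
  have hf0 : ∀ s, 0 ≤ f s := fun s =>
    add_nonneg (sq_nonneg _) (Finset.sum_nonneg fun _ _ => sq_nonneg _)
  have hbox : ∑ s ∈ Box n, wt lam n s * f s ≤ 2 * (Real.exp (SS lam n) * D) := by
    simp only [hf, mul_add, Finset.sum_add_distrib, wt_pp]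
    linarith
  have hsb := sizebias_le lam hl Θ hΘ hT n f hf0
  have hpt : ∀ (s : Fin n → ℕ) (i : Fin n), (∑ j, g j (s j) - a) ^ 2 ≤
      3 * f (s - Pi.single i 1) + 3 * g i (s i) ^ 2 := by
    intro s i
    rw [sum_sub_single g s i]
    have h1 : g i (s i - 1) ^ 2 ≤ ∑ j, g j ((s - Pi.single i 1 : Fin n → ℕ) j) ^ 2 := by
      have := Finset.single_le_sum (f := fun j => g j ((s - Pi.single i 1 : Fin n → ℕ) j) ^ 2)
        (fun _ _ => sq_nonneg _) (Finset.mem_univ i)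
      simpa using this
    simp only [hf]
    set x := ∑ j, g j ((s - Pi.single i 1 : Fin n → ℕ) j)
    nlinarith [sq_nonneg (x - a - g i (s i)), sq_nonneg (x - a + g i (s i - 1)),
      sq_nonneg (g i (s i) + g i (s i - 1))]
  have hmain : (n : ℝ) * ∑ s ∈ Om n n, wt lam n s * (∑ j, g j (s j) - a) ^ 2 ≤
      3 * (∑ i : Fin n, (((i : ℕ) + 1 : ℕ) : ℝ) *
        ∑ s ∈ Om n n, wt lam n s * (s i : ℝ) * f (s - Pi.single i 1)) +
      3 * (n * WW lam n g) := by
    rw [sum_ell lam n (fun s => (∑ j, g j (s j) - a) ^ 2)]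
    have h2 : ∑ i : Fin n, (((i : ℕ) + 1 : ℕ) : ℝ) *
        ∑ s ∈ Om n n, wt lam n s * (s i : ℝ) * g i (s i) ^ 2 ≤ n * WW lam n g := by
      unfold WW
      simp only [Finset.mul_sum]
      rw [Finset.sum_comm]
      apply Finset.sum_le_sum
      intro s hs
      rw [mem_Om le_rfl] at hs
      apply Finset.sum_le_sum
      intro i _
      have h3 : (((i : ℕ) + 1 : ℕ) : ℝ) * (s i : ℝ) ≤ n := by
        have := le_ell s i
        rw [hs] at this
        exact_mod_cast this
      have h4 : 0 ≤ wt lam n s * g i (s i) ^ 2 := mul_nonneg (wt_nonneg lam hl n s) (sq_nonneg _)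
      have := mul_le_mul_of_nonneg_right h3 h4
      linarith
    refine le_trans ?_ (add_le_add (le_refl _) (mul_le_mul_of_nonneg_left h2 (by norm_num)))
    simp only [Finset.mul_sum]
    rw [← Finset.sum_add_distrib]
    apply Finset.sum_le_sum
    intro i _
    rw [← Finset.sum_add_distrib]
    apply Finset.sum_le_sum
    intro s _
    have h5 : 0 ≤ (((i : ℕ) + 1 : ℕ) : ℝ) * (wt lam n s * (s i : ℝ)) :=
      mul_nonneg (Nat.cast_nonneg _) (mul_nonneg (wt_nonneg lam hl n s) (Nat.cast_nonneg _))
    have := mul_le_mul_of_nonneg_left (hpt s i) h5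
    linarith
  have hDle := D_le lam hl Θ θ' hΘ hθ' hT hQ n hn g hg
  rw [← hD] at hDle
  have hQn := hQ n hn
  set W := WW lam n g
  set V := ∑ s ∈ Om n n, wt lam n s * (∑ j, g j (s j) - a) ^ 2
  have k1 : (n : ℝ) * V ≤ 6 * Θ * (Real.exp (SS lam n) * D) + 3 * (n * W) := by
    have := mul_le_mul_of_nonneg_left hbox hΘ.le
    linarith
  have k2 : θ' ^ 2 * (Real.exp (SS lam n) * D) ≤ n * (2 * Θ * Real.exp Θ * W) := by
    have e1 := mul_le_mul_of_nonneg_right hQn (mul_nonneg hθ'.le hD0)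
    have e2 := mul_le_mul_of_nonneg_left hDle (by linarith : (0 : ℝ) ≤ n)
    nlinarith
  have k3 : (n : ℝ) * (θ' ^ 2 * V) ≤ n * (12 * Θ ^ 2 * Real.exp Θ * W + 3 * θ' ^ 2 * W) := by
    have e1 := mul_le_mul_of_nonneg_left k1 (sq_nonneg θ')
    have e2 := mul_le_mul_of_nonneg_left k2 (by positivity : (0 : ℝ) ≤ 6 * Θ)
    nlinarith
  have k4 : θ' ^ 2 * V ≤ 12 * Θ ^ 2 * Real.exp Θ * W + 3 * θ' ^ 2 * W :=
    le_of_mul_le_mul_left k3 (by linarith)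
  have k5 : (3 + 12 * Θ ^ 2 * Real.exp Θ / θ' ^ 2) * W =
      (12 * Θ ^ 2 * Real.exp Θ * W + 3 * θ' ^ 2 * W) / θ' ^ 2 := by
    field_simp
    ring
  rw [k5, le_div_iff₀ (by positivity)]
  linarith

lemma large_part {n : ℕ} (hn : 1 ≤ n) (J : ℕ) (b : Fin n → ℕ → ℝ)
    (hb : ∀ j k, b j k ≠ 0 → (j : ℕ) < J ∨ n < 3 * (((j : ℕ) + 1) * k))
    (s : Fin n → ℕ) (hs : ell s = n) :
    (∑ j, b j (s j)) ^ 2 ≤ ((J : ℝ) + 3) * ∑ j, b j (s j) ^ 2 := by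
  classical
  set T : Finset (Fin n) := Finset.univ.filter (fun j => b j (s j) ≠ 0) with hTdef
  have e1 : ∑ j, b j (s j) = ∑ j ∈ T, b j (s j) := by
    rw [hTdef, Finset.sum_filter_ne_zero]
  have e2 : ∑ j ∈ T, b j (s j) ^ 2 ≤ ∑ j, b j (s j) ^ 2 :=
    Finset.sum_le_sum_of_subset_of_nonneg (Finset.subset_univ _) (fun _ _ _ => sq_nonneg _)
  set A : Finset (Fin n) := Finset.univ.filter (fun j => (j : ℕ) < J) with hA
  set B : Finset (Fin n) := Finset.univ.filter (fun j => n < 3 * (((j : ℕ) + 1) * s j)) with hB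
  have c1 : T ⊆ A ∪ B := by
    intro j hj
    have := hb j (s j) (Finset.mem_filter.1 hj).2
    simp only [hA, hB, Finset.mem_union, Finset.mem_filter, Finset.mem_univ, true_and]
    exact this
  have c2 : A.card ≤ J := by
    have : A.card ≤ (Finset.range J).card := by
      apply Finset.card_le_card_of_injOn (fun j : Fin n => (j : ℕ))
      · intro j hj
        simpa [hA] using hj
      · intro x _ y _ h
        exact Fin.ext h
    simpa using this
  have c3 : B.card ≤ 3 := by
    have h1 : B.card * n ≤ ∑ j ∈ B, 3 * (((j : ℕ) + 1) * s j) := by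
      rw [← smul_eq_mul]
      apply Finset.card_nsmul_le_sum
      intro j hj
      exact (Finset.mem_filter.1 hj).2.le
    have h2 : ∑ j ∈ B, 3 * (((j : ℕ) + 1) * s j) ≤ 3 * n := by
      rw [← Finset.mul_sum]
      conv_rhs => rw [← hs]
      apply Nat.mul_le_mul_left
      exact Finset.sum_le_sum_of_subset (Finset.subset_univ _)
    exact Nat.le_of_mul_le_mul_right (h1.trans h2) hn
  have c4 : T.card ≤ J + 3 :=
    (Finset.card_le_card c1).trans ((Finset.card_union_le _ _).trans (by omega))
  have c5 : (T.card : ℝ) ≤ (J : ℝ) + 3 := by exact_mod_cast c4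
  rw [e1]
  calc (∑ j ∈ T, b j (s j)) ^ 2 ≤ T.card * ∑ j ∈ T, b j (s j) ^ 2 := sq_sum_le_card_mul_sum_sq
    _ ≤ ((J : ℝ) + 3) * ∑ j, b j (s j) ^ 2 := by
      apply mul_le_mul c5 e2 (Finset.sum_nonneg fun _ _ => sq_nonneg _) (by positivity)

lemma WW_mono (lam : ℕ → ℝ) (hl : ∀ j, 1 ≤ j → 0 ≤ lam j) (n : ℕ) (g h : Fin n → ℕ → ℝ)
    (H : ∀ j k, g j k ^ 2 ≤ h j k ^ 2) : WW lam n g ≤ WW lam n h := by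
  unfold WW
  apply Finset.sum_le_sum
  intro s _
  exact mul_le_mul_of_nonneg_left (Finset.sum_le_sum fun j _ => H j (s j)) (wt_nonneg lam hl n s)

lemma main_one (lam : ℕ → ℝ) (hl : ∀ j, 1 ≤ j → 0 ≤ lam j) (Θ θ' : ℝ) (hΘ : 0 < Θ)
    (hθ' : 0 < θ')
    (hT : ∀ j : ℕ, 1 ≤ j → (j : ℝ) * lam j ≤ Θ)
    (hQ : ∀ n : ℕ, 1 ≤ n → θ' * Real.exp (SS lam n) ≤ n * Qfun lam n)
    (n : ℕ) (hn : 1 ≤ n) (h : Fin n → ℕ → ℝ) (h0 : ∀ j, h j 0 = 0) :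
    ∃ a : ℝ, ∑ s ∈ Om n n, wt lam n s * (∑ j, h j (s j) - a) ^ 2 ≤
      (2 * ((⌈4 * Θ ^ 2 / θ'⌉₊ : ℝ) + 3) + 2 * (3 + 12 * Θ ^ 2 * Real.exp Θ / θ' ^ 2)) *
        WW lam n h := by
  classical
  set J := ⌈4 * Θ ^ 2 / θ'⌉₊ with hJ
  set K := 3 + 12 * Θ ^ 2 * Real.exp Θ / θ' ^ 2 with hK
  have hK0 : 0 ≤ K := by positivity
  set g : Fin n → ℕ → ℝ := fun j k =>
    if J ≤ (j : ℕ) ∧ 1 ≤ k ∧ 3 * (((j : ℕ) + 1) * k) ≤ n then h j k else 0 with hg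
  set b : Fin n → ℕ → ℝ := fun j k =>
    if J ≤ (j : ℕ) ∧ 1 ≤ k ∧ 3 * (((j : ℕ) + 1) * k) ≤ n then 0 else h j k with hb
  have hgb : ∀ j k, h j k = b j k + g j k := by
    intro j k
    simp only [hg, hb]
    split_ifs <;> simp
  have hgW : WW lam n g ≤ WW lam n h := by
    apply WW_mono lam hl
    intro j k
    simp only [hg]
    split_ifs
    · rfl
    · simpa using sq_nonneg _
  have hbW : WW lam n b ≤ WW lam n h := by
    apply WW_mono lam hl
    intro j k
    simp only [hb]
    split_ifs
    · simpa using sq_nonneg _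
    · rfl
  obtain ⟨a, ha⟩ := small_part lam hl Θ θ' hΘ hθ' hT hQ n hn g (by
    intro j k hne
    simp only [hg] at hne
    split_ifs at hne with hc
    · refine ⟨?_, hc.2⟩
      have h1 : 4 * Θ ^ 2 / θ' ≤ J := Nat.le_ceil _
      rw [div_le_iff₀ hθ'] at h1
      have h2 : (J : ℝ) ≤ (((j : ℕ) + 1 : ℕ) : ℝ) := by
        exact_mod_cast hc.1.trans (Nat.le_succ _)
      have := mul_le_mul_of_nonneg_right h2 hθ'.le
      linarith
    · exact absurd rfl hne)
  have hlarge := large_part hn J b (by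
    intro j k hne
    simp only [hb] at hne
    split_ifs at hne with hc
    · exact absurd rfl hne
    · have hk : 1 ≤ k := by
        by_contra hk
        have : k = 0 := by omega
        subst this
        exact hne (h0 j)
      by_contra hcon
      apply hc
      refine ⟨?_, hk, ?_⟩ <;> omega)
  refine ⟨a, ?_⟩
  have s1 : ∑ s ∈ Om n n, wt lam n s * (∑ j, h j (s j) - a) ^ 2 ≤
      2 * (((J : ℝ) + 3) * WW lam n b) +
      2 * ∑ s ∈ Om n n, wt lam n s * (∑ j, g j (s j) - a) ^ 2 := by
    unfold WW
    simp only [Finset.mul_sum (s := Om n n)]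
    rw [← Finset.sum_add_distrib]
    apply Finset.sum_le_sum
    intro s hs
    rw [mem_Om le_rfl] at hs
    have h1 := hlarge s hs
    have hw := wt_nonneg lam hl n s
    have e : ∑ j, h j (s j) = ∑ j, b j (s j) + ∑ j, g j (s j) := by
      rw [← Finset.sum_add_distrib]
      exact Finset.sum_congr rfl fun j _ => hgb j (s j)
    rw [e]
    set X := ∑ j, b j (s j)
    set Y := ∑ j, g j (s j)
    have h2 : (X + Y - a) ^ 2 ≤
        2 * (((J : ℝ) + 3) * ∑ j, b j (s j) ^ 2) + 2 * (Y - a) ^ 2 := by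
      nlinarith [sq_nonneg (X - (Y - a))]
    have := mul_le_mul_of_nonneg_left h2 hw
    linarith
  have s2 := mul_le_mul_of_nonneg_left hgW hK0
  have s3 := mul_le_mul_of_nonneg_left hbW (by positivity : (0 : ℝ) ≤ (J : ℝ) + 3)
  linarith

lemma variance_le (lam : ℕ → ℝ) (n : ℕ) (hQ : 0 < Qfun lam n) (f : (Fin n → ℕ) → ℝ) (a : ℝ) :
    variancen lam n f ≤ (∑ s ∈ Om n n, wt lam n s * (f s - a) ^ 2) / Qfun lam n := by
  unfold variancen expectn
  rw [omega_eq]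
  have hq : Qfun lam n = ∑ s ∈ Om n n, wt lam n s := rfl
  have e : ∑ s ∈ Om n n, wt lam n s * (f s - a) ^ 2 = ∑ s ∈ Om n n, wt lam n s * f s ^ 2
      - 2 * a * ∑ s ∈ Om n n, wt lam n s * f s + a ^ 2 * Qfun lam n := by
    rw [hq]
    simp only [Finset.mul_sum]
    rw [← Finset.sum_sub_distrib, ← Finset.sum_add_distrib]
    exact Finset.sum_congr rfl fun s _ => by ring
  rw [e]
  set q := Qfun lam n
  set M := ∑ s ∈ Om n n, wt lam n s * f s
  set N := ∑ s ∈ Om n n, wt lam n s * f s ^ 2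
  have : (N - 2 * a * M + a ^ 2 * q) / q = N / q - 2 * a * (M / q) + a ^ 2 := by
    field_simp
  rw [this]
  nlinarith [sq_nonneg (M / q - a)]

lemma rhs_eq (lam : ℕ → ℝ) (n : ℕ) (h : ℕ → ℕ → ℝ) (h0 : ∀ j, h j 0 = 0) :
    ∑ p ∈ (Finset.Icc 1 n ×ˢ Finset.Icc 1 n).filter (fun p : ℕ × ℕ => p.1 * p.2 ≤ n),
      lam p.1 ^ p.2 * (h p.1 p.2) ^ 2 / (p.2 ! : ℝ) *
        (Qj lam p.1 (n - p.1 * p.2) / Qfun lam n) =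
    WW lam n (fun j k => h ((j : ℕ) + 1) k) / Qfun lam n := by
  rw [WW_eq, Finset.sum_filter, Finset.sum_product, sum_Icc_fin, Finset.sum_div]
  apply Finset.sum_congr rfl
  intro j _
  rw [Finset.sum_div, Finset.sum_range_succ', sum_Icc_fin,
    ← Fin.sum_univ_eq_sum_range (fun k => (if ((j : ℕ) + 1) * (k + 1) ≤ n then
      pp lam n j (k + 1) * h ((j : ℕ) + 1) (k + 1) ^ 2 *
        Qj lam ((j : ℕ) + 1) (n - ((j : ℕ) + 1) * (k + 1)) else 0) / Qfun lam n)]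
  simp only [h0]
  simp only [ne_eq, OfNat.ofNat_ne_zero, not_false_eq_true, zero_pow, mul_zero, zero_mul,
    ite_self, zero_div, add_zero]
  apply Finset.sum_congr rfl
  intro k _
  split_ifs
  · unfold pp
    ring
  · simp

/-- tilting -/
lemma wt_tilt (lam : ℕ → ℝ) (ρ : ℝ) (n : ℕ) (s : Fin n → ℕ) :
    wt (fun j => lam j * ρ ^ j) n s = ρ ^ ell s * wt lam n s := by
  unfold wt ell
  rw [← Finset.prod_pow_eq_pow_sum, ← Finset.prod_mul_distrib]
  apply Finset.prod_congr rfl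
  intro j _
  rw [mul_pow, ← pow_mul]
  ring

lemma ell_of_mem {n : ℕ} {s : Fin n → ℕ} (hs : s ∈ OmegaSet n) : ell s = n :=
  (Finset.mem_filter.1 hs).2

lemma Qfun_tilt (lam : ℕ → ℝ) (ρ : ℝ) (n : ℕ) :
    Qfun (fun j => lam j * ρ ^ j) n = ρ ^ n * Qfun lam n := by
  unfold Qfun
  rw [Finset.mul_sum]
  apply Finset.sum_congr rfl
  intro s hs
  rw [wt_tilt, ell_of_mem hs]

lemma Qj_tilt (lam : ℕ → ℝ) (ρ : ℝ) (j n : ℕ) :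
    Qj (fun j => lam j * ρ ^ j) j n = ρ ^ n * Qj lam j n := by
  unfold Qj
  rw [Finset.mul_sum]
  apply Finset.sum_congr rfl
  intro s hs
  rw [wt_tilt, ell_of_mem (Finset.mem_filter.1 hs).1]

lemma expectn_tilt (lam : ℕ → ℝ) (ρ : ℝ) (hρ : 0 < ρ) (n : ℕ) (f : (Fin n → ℕ) → ℝ) :
    expectn (fun j => lam j * ρ ^ j) n f = expectn lam n f := by
  unfold expectn
  have : ∑ s ∈ OmegaSet n, wt (fun j => lam j * ρ ^ j) n s * f s =
      ρ ^ n * ∑ s ∈ OmegaSet n, wt lam n s * f s := by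
    rw [Finset.mul_sum]
    apply Finset.sum_congr rfl
    intro s hs
    rw [wt_tilt, ell_of_mem hs, mul_assoc]
  rw [this, Qfun_tilt, mul_div_mul_left _ _ (by positivity)]

end VarAux


/-- Theorem 1: for a weakly logarithmic class of assemblies (with constants
`ρ, Θ, θ, θ′ > 0`, `n₀ ≥ 1`) there is a constant `C > 0` such that for every `n ≥ 1`
and every additive function `h(s̄) = ∑_{j=1}^n h_j(s_j)` (with `h_j(0) = 0`),
`V_n h ≤ C · ∑_{jk ≤ n} (λ_j^k h_j(k)² / k!) · Q^{{j}}(n−jk)/Q(n)`. -/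
theorem variance_additive_weakly_logarithmic
    (ρ Θ θ θ' : ℝ) (n₀ : ℕ) (hρ : 0 < ρ) (hΘ : 0 < Θ) (hθ : 0 < θ) (hθ' : 0 < θ')
    (hn₀ : 1 ≤ n₀) :
    ∃ C : ℝ, 0 < C ∧
      ∀ lam : ℕ → ℝ,
        (∀ j, 1 ≤ j → 0 ≤ lam j) →
        (∀ j, 1 ≤ j → ρ ^ j * j * lam j ≤ Θ) →
        (∀ n, n₀ ≤ n → θ * n ≤ ∑ j ∈ Finset.Icc 1 n, ρ ^ j * j * lam j) →
        (∀ n : ℕ, 1 ≤ n →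
          θ' * Real.exp (∑ j ∈ Finset.Icc 1 n, lam j * ρ ^ j) ≤ n * Qfun lam n * ρ ^ n) →
        ∀ n : ℕ, 1 ≤ n →
          ∀ h : ℕ → ℕ → ℝ, (∀ j, h j 0 = 0) →
            variancen lam n (fun s => ∑ j : Fin n, h ((j : ℕ) + 1) (s j)) ≤
              C * ∑ p ∈ (Finset.Icc 1 n ×ˢ Finset.Icc 1 n).filter
                    (fun p : ℕ × ℕ => p.1 * p.2 ≤ n),
                  lam p.1 ^ p.2 * (h p.1 p.2) ^ 2 / (p.2 ! : ℝ) *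
                    (Qj lam p.1 (n - p.1 * p.2) / Qfun lam n) := by
  refine ⟨2 * ((⌈4 * Θ ^ 2 / θ'⌉₊ : ℝ) + 3) + 2 * (3 + 12 * Θ ^ 2 * Real.exp Θ / θ' ^ 2),
    by positivity, ?_⟩
  intro lam hl hT _ hQ n hn h h0
  have hl' : ∀ j, 1 ≤ j → 0 ≤ (fun j => lam j * ρ ^ j) j := fun j hj =>
    mul_nonneg (hl j hj) (by positivity)
  have hT' : ∀ j : ℕ, 1 ≤ j → (j : ℝ) * (fun j => lam j * ρ ^ j) j ≤ Θ := by
    intro j hj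
    have := hT j hj
    simp only
    linarith
  have hQ' : ∀ n : ℕ, 1 ≤ n → θ' * Real.exp (VarAux.SS (fun j => lam j * ρ ^ j) n) ≤
      n * Qfun (fun j => lam j * ρ ^ j) n := by
    intro m hm
    have := hQ m hm
    rw [VarAux.Qfun_tilt]
    unfold VarAux.SS
    linarith
  have hvar : ∀ f, variancen (fun j => lam j * ρ ^ j) n f = variancen lam n f := by
    intro f
    unfold variancen
    rw [VarAux.expectn_tilt lam ρ hρ, VarAux.expectn_tilt lam ρ hρ]
  have hpos : 0 < Qfun (fun j => lam j * ρ ^ j) n := by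
    have h1 := hQ' n hn
    have h2 : 0 < θ' * Real.exp (VarAux.SS (fun j => lam j * ρ ^ j) n) := by positivity
    exact pos_of_mul_pos_right (h2.trans_le h1) (Nat.cast_nonneg n)
  obtain ⟨a, ha⟩ := VarAux.main_one (fun j => lam j * ρ ^ j) hl' Θ θ' hΘ hθ' hT' hQ' n hn
    (fun j k => h ((j : ℕ) + 1) k) (fun j => h0 _)
  have hv := VarAux.variance_le (fun j => lam j * ρ ^ j) n hpos
    (fun s => ∑ j : Fin n, h ((j : ℕ) + 1) (s j)) a
  rw [hvar] at hv
  have hr := VarAux.rhs_eq (fun j => lam j * ρ ^ j) n h h0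
  have hr2 : ∑ p ∈ (Finset.Icc 1 n ×ˢ Finset.Icc 1 n).filter (fun p : ℕ × ℕ => p.1 * p.2 ≤ n),
      lam p.1 ^ p.2 * (h p.1 p.2) ^ 2 / (p.2 ! : ℝ) *
        (Qj lam p.1 (n - p.1 * p.2) / Qfun lam n) =
      VarAux.WW (fun j => lam j * ρ ^ j) n (fun j k => h ((j : ℕ) + 1) k) /
        Qfun (fun j => lam j * ρ ^ j) n := by
    rw [← hr]
    apply Finset.sum_congr rfl
    intro p hp
    have hle := (Finset.mem_filter.1 hp).2
    have e : ρ ^ n = ρ ^ (p.1 * p.2) * ρ ^ (n - p.1 * p.2) := by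
      rw [← pow_add]
      congr 1
      omega
    rw [VarAux.Qfun_tilt, VarAux.Qj_tilt, e]
    have r1 : ρ ^ (p.1 * p.2) ≠ 0 := by positivity
    have r2 : ρ ^ (n - p.1 * p.2) ≠ 0 := by positivity
    simp only [mul_pow, ← pow_mul]
    field_simp
  rw [hr2, ← mul_div_assoc]
  refine hv.trans ?_
  exact div_le_div_of_nonneg_right ha hpos.le
end

section
/- Let ρ, Θ, θ, θ′ > 0 and n_0 ≥ 1 be constants. Then there exists a constant C > 0, depending only on ρ, Θ, θ, θ′ and n_0, with the following property. Let (λ_j)_{j≥1} be a sequence of nonnegative reals that is weakly logarithmic with these constants, i.e. (i) ρ^j · j · λ_j ≤ Θ for all j ≥ 1; (ii) ∑_{j≤n} ρ^j · j · λ_j ≥ θ·n for all n ≥ n_0; (iii) n·Q(n)·ρ^n ≥ θ′·exp{∑_{j≤n} λ_j ρ^j} for all n ≥ 1, where Q(n) := ∑_{ℓ(s̄)=n} ∏_{j≤n} λ_j^{s_j}/s_j!. Let n ≥ 1, let a_1, …, a_n be arbitrary real numbers, and define the completely additive function h(s̄) := ∑_{j=1}^n a_j · s_j on the set Ω_n :=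 { s̄ ∈ ℕ_0^n : ℓ(s̄) = n }, endowed with the probability measure P_n(s̄) := (1/Q(n)) ∏_{j≤n} λ_j^{s_j}/s_j!. Then the variance of h under P_n satisfies V_n h := E_n h² − (E_n h)² ≤ C · ∑_{j=1}^{n} λ_j a_j² · Q(n − j) / Q(n), where Q(0) := 1. -/
open Nat Finset

/-- Total size of a vector. -/
def ellF (n : ℕ) (s : Fin n → ℕ) : ℕ := ∑ j : Fin n, ((j : ℕ) + 1) * s j

/-- Vectors of total size `m` in the box of side `n`. -/
def BB (n m : ℕ) : Finset (Fin n → ℕ) :=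
  (Fintype.piFinset fun _ : Fin n => Finset.range (n + 1)).filter
    (fun s : Fin n → ℕ => ellF n s = m)

theorem omega_eq_BB (n : ℕ) : OmegaSet n = BB n n := rfl

theorem le_ellF (n : ℕ) (s : Fin n → ℕ) (j : Fin n) : ((j : ℕ) + 1) * s j ≤ ellF n s :=
  Finset.single_le_sum (f := fun j : Fin n => ((j : ℕ) + 1) * s j)
    (fun _ _ => Nat.zero_le _) (Finset.mem_univ j)

theorem coord_le_ellF (n : ℕ) (s : Fin n → ℕ) (j : Fin n) : s j ≤ ellF n s :=
  le_trans (Nat.le_mul_of_pos_left _ (Nat.succ_pos _)) (le_ellF n s j)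

theorem mem_BB {n m : ℕ} (hm : m ≤ n) (s : Fin n → ℕ) : s ∈ BB n m ↔ ellF n s = m := by
  unfold BB
  simp only [Finset.mem_filter, Fintype.mem_piFinset, Finset.mem_range]
  constructor
  · exact fun h => h.2
  · intro h
    refine ⟨fun j => ?_, h⟩
    have := coord_le_ellF n s j
    omega

theorem Q_bridge (lam : ℕ → ℝ) (m k : ℕ) :
    ∑ t ∈ BB (m + k) m, wt lam (m + k) t = Qfun lam m := by
  unfold Qfun
  rw [omega_eq_BB]
  have hl : ∀ s : Fin m → ℕ, ellF (m + k) (Fin.append s (fun _ : Fin k => 0)) = ellF m s := by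
    intro s
    simp [ellF, Fin.sum_univ_add]
  have hw : ∀ s : Fin m → ℕ,
      wt lam (m + k) (Fin.append s (fun _ : Fin k => 0)) = wt lam m s := by
    intro s
    simp [wt, Fin.prod_univ_add]
  have hr : ∀ t : Fin (m + k) → ℕ, t ∈ BB (m + k) m →
      Fin.append (fun i => t (Fin.castAdd k i)) (fun _ : Fin k => 0) = t := by
    intro t ht
    rw [mem_BB (Nat.le_add_right m k)] at ht
    funext i
    refine Fin.addCases (fun i => ?_) (fun i => ?_) i
    · simp
    · simp only [Fin.append_right]
      have h := le_ellF (m + k) t (Fin.natAdd m i)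
      rw [ht] at h
      simp only [Fin.val_natAdd] at h
      by_contra hne
      have h1 : 1 ≤ t (Fin.natAdd m i) := Nat.one_le_iff_ne_zero.mpr (Ne.symm hne)
      have := Nat.mul_le_mul_left (m + (i : ℕ) + 1) h1
      omega
  symm
  refine Finset.sum_nbij' (fun s => Fin.append s (fun _ : Fin k => 0))
    (fun t i => t (Fin.castAdd k i)) ?_ ?_ ?_ ?_ ?_
  · intro s hs
    rw [mem_BB le_rfl] at hs
    rw [mem_BB (Nat.le_add_right m k), hl, hs]
  · intro t ht
    have h := hr t ht
    rw [mem_BB (Nat.le_add_right m k)] at ht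
    rw [mem_BB le_rfl, ← hl, h, ht]
  · intro s _
    funext i
    simp
  · exact hr
  · intro s _
    exact (hw s).symm

theorem Q_bridge' (lam : ℕ → ℝ) {m n : ℕ} (h : m ≤ n) :
    ∑ t ∈ BB n m, wt lam n t = Qfun lam m := by
  obtain ⟨k, rfl⟩ := Nat.exists_eq_add_of_le h
  exact Q_bridge lam m k

theorem wt_nonneg (lam : ℕ → ℝ) (hl : ∀ j, 1 ≤ j → 0 ≤ lam j) (n : ℕ) (s : Fin n → ℕ) :
    0 ≤ wt lam n s :=
  Finset.prod_nonneg fun j _ =>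
    div_nonneg (pow_nonneg (hl _ (Nat.le_add_left 1 _)) _) (Nat.cast_nonneg _)

/-- Adding one component. -/
def bump {n : ℕ} (j : Fin n) (t : Fin n → ℕ) : Fin n → ℕ := Function.update t j (t j + 1)

theorem ell_bump {n : ℕ} (j : Fin n) (t : Fin n → ℕ) :
    ellF n (bump j t) = ellF n t + (j + 1) := by
  unfold ellF
  rw [← Finset.add_sum_erase _ _ (Finset.mem_univ j),
    ← Finset.add_sum_erase (a := j) _ (fun i : Fin n => ((i : ℕ) + 1) * t i) (Finset.mem_univ j)]
  have : ∑ x ∈ Finset.univ.erase j, ((x : ℕ) + 1) * bump j t x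
      = ∑ x ∈ Finset.univ.erase j, ((x : ℕ) + 1) * t x := by
    refine Finset.sum_congr rfl fun x hx => ?_
    rw [bump, Function.update_of_ne (Finset.ne_of_mem_erase hx)]
  rw [this]
  simp [bump]
  ring

theorem wt_bump (lam : ℕ → ℝ) {n : ℕ} (j : Fin n) (t : Fin n → ℕ) :
    wt lam n (bump j t) * (bump j t j : ℝ) = lam ((j : ℕ) + 1) * wt lam n t := by
  unfold wt
  rw [← Finset.mul_prod_erase _ _ (Finset.mem_univ j),
    ← Finset.mul_prod_erase (a := j) _ (fun i : Fin n => lam ((i : ℕ) + 1) ^ (t i) / ((t i)! : ℝ))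
      (Finset.mem_univ j)]
  have : ∏ x ∈ Finset.univ.erase j, lam ((x : ℕ) + 1) ^ (bump j t x) / ((bump j t x)! : ℝ)
      = ∏ x ∈ Finset.univ.erase j, lam ((x : ℕ) + 1) ^ (t x) / ((t x)! : ℝ) := by
    refine Finset.prod_congr rfl fun x hx => ?_
    rw [bump, Function.update_of_ne (Finset.ne_of_mem_erase hx)]
  rw [this]
  have h1 : ((t j)! : ℝ) ≠ 0 := by positivity
  have h2 : ((t j : ℝ) + 1) ≠ 0 := by positivity
  simp only [bump, Function.update_self, Nat.factorial_succ, Nat.cast_mul, Nat.cast_add,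
    Nat.cast_one]
  field_simp
  ring

theorem key (lam : ℕ → ℝ) {n : ℕ} (j : Fin n) (f : (Fin n → ℕ) → ℝ) :
    ∑ s ∈ BB n n, wt lam n s * ((s j : ℝ) * f s)
      = lam ((j : ℕ) + 1) * ∑ t ∈ BB n (n - (j + 1)), wt lam n t * f (bump j t) := by
  have h0 : ∑ s ∈ (BB n n).filter (fun s => s j ≠ 0), wt lam n s * ((s j : ℝ) * f s)
      = ∑ s ∈ BB n n, wt lam n s * ((s j : ℝ) * f s) := by
    refine Finset.sum_filter_of_ne fun s _ hs h => hs ?_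
    simp [h]
  rw [← h0, Finset.mul_sum]
  symm
  have hj := j.2
  have hr : ∀ s : Fin n → ℕ, s j ≠ 0 → bump j (Function.update s j (s j - 1)) = s := by
    intro s hs
    simp only [bump, Function.update_self, Function.update_idem]
    rw [Nat.sub_add_cancel (Nat.one_le_iff_ne_zero.mpr hs), Function.update_eq_self]
  refine Finset.sum_nbij' (fun t => bump j t) (fun s => Function.update s j (s j - 1)) ?_ ?_ ?_ ?_ ?_
  · intro t ht
    rw [mem_BB (Nat.sub_le _ _)] at ht
    rw [Finset.mem_filter, mem_BB le_rfl, ell_bump, ht]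
    refine ⟨by omega, by simp [bump]⟩
  · intro s hs
    rw [Finset.mem_filter, mem_BB le_rfl] at hs
    rw [mem_BB (Nat.sub_le _ _)]
    have h := ell_bump j (Function.update s j (s j - 1))
    rw [hr s hs.2, hs.1] at h
    omega
  · intro t _
    simp [bump]
  · intro s hs
    exact hr s (Finset.mem_filter.mp hs).2
  · intro t _
    rw [← mul_assoc, ← wt_bump, mul_assoc]

theorem poisson_one (l : ℝ) (hl : 0 ≤ l) (V c a : ℝ) (hV : 0 ≤ V) (N : ℕ) :
    ∑ t ∈ Finset.range N, l ^ t / (t ! : ℝ) * (V + (c + a * ((t : ℝ) - l)) ^ 2)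
      ≤ Real.exp l * (V + (c ^ 2 + a ^ 2 * l)) := by
  have e0 : HasSum (fun t : ℕ => l ^ t / (t ! : ℝ)) (Real.exp l) := by
    have := NormedSpace.expSeries_div_hasSum_exp l
    rwa [← Real.exp_eq_exp_ℝ] at this
  have e1 : HasSum (fun t : ℕ => l ^ t / (t ! : ℝ) * t) (l * Real.exp l) := by
    rw [← hasSum_nat_add_iff' 1]
    simp only [Finset.range_one, Finset.sum_singleton, Nat.cast_zero, mul_zero, sub_zero]
    refine (e0.mul_left l).congr_fun ?_
    intro t
    have h1 : (t ! : ℝ) ≠ 0 := by positivity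
    have h2 : ((t : ℝ) + 1) ≠ 0 := by positivity
    simp only [Nat.factorial_succ, Nat.cast_mul, Nat.cast_add, Nat.cast_one]
    field_simp
    ring
  have e2 : HasSum (fun t : ℕ => l ^ t / (t ! : ℝ) * (t * (t : ℝ)))
      (l * (l * Real.exp l + Real.exp l)) := by
    rw [← hasSum_nat_add_iff' 1]
    simp only [Finset.range_one, Finset.sum_singleton, Nat.cast_zero, mul_zero, sub_zero]
    refine ((e1.add e0).mul_left l).congr_fun ?_
    intro t
    have h1 : (t ! : ℝ) ≠ 0 := by positivity
    have h2 : ((t : ℝ) + 1) ≠ 0 := by positivity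
    simp only [Nat.factorial_succ, Nat.cast_mul, Nat.cast_add, Nat.cast_one]
    field_simp
    ring
  have e3 : HasSum (fun t : ℕ => l ^ t / (t ! : ℝ) * (V + (c + a * ((t : ℝ) - l)) ^ 2))
      (Real.exp l * (V + (c ^ 2 + a ^ 2 * l))) := by
    have e4 := (((e0.mul_left (V + (c - a * l) ^ 2)).add
      (e1.mul_left (2 * a * (c - a * l)))).add (e2.mul_left (a ^ 2)))
    have h4 : (V + (c - a * l) ^ 2) * Real.exp l + 2 * a * (c - a * l) * (l * Real.exp l)
        + a ^ 2 * (l * (l * Real.exp l + Real.exp l))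
        = Real.exp l * (V + (c ^ 2 + a ^ 2 * l)) := by ring
    rw [h4] at e4
    refine e4.congr_fun ?_
    intro t
    ring
  exact sum_le_hasSum _ (fun t _ => by positivity) e3

theorem poisson_box (N : ℕ) : ∀ (n : ℕ) (l a : Fin n → ℝ) (_ : ∀ j, 0 ≤ l j) (c : ℝ),
    ∑ t ∈ Fintype.piFinset (fun _ : Fin n => Finset.range N),
      (∏ j, l j ^ (t j) / ((t j)! : ℝ)) * (c + (∑ j, a j * (t j : ℝ) - ∑ j, a j * l j)) ^ 2
      ≤ Real.exp (∑ j, l j) * (∑ j, l j * a j ^ 2 + c ^ 2) := by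
  intro n
  induction n with
  | zero =>
    intro l a _ c
    simp
  | succ n ih =>
    intro l a hl c
    have h1 : ∑ t ∈ Fintype.piFinset (fun _ : Fin (n + 1) => Finset.range N),
        (∏ j, l j ^ (t j) / ((t j)! : ℝ)) * (c + (∑ j, a j * (t j : ℝ) - ∑ j, a j * l j)) ^ 2
        = ∑ x ∈ Finset.range N, ∑ t ∈ Fintype.piFinset (fun _ : Fin n => Finset.range N),
          (l 0 ^ x / (x ! : ℝ)) * ((∏ j, l (Fin.succ j) ^ (t j) / ((t j)! : ℝ)) *
            ((c + a 0 * ((x : ℝ) - l 0)) +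
              (∑ j : Fin n, a (Fin.succ j) * (t j : ℝ)
                - ∑ j : Fin n, a (Fin.succ j) * l (Fin.succ j))) ^ 2) := by
      rw [← Finset.sum_product']
      symm
      refine Finset.sum_nbij' (fun p => (Fin.cons p.1 p.2 : Fin (n + 1) → ℕ))
        (fun t => (t 0, fun j => t (Fin.succ j))) ?_ ?_ ?_ ?_ ?_
      · intro p hp
        simp only [Finset.mem_product, Fintype.mem_piFinset] at hp
        rw [Fintype.mem_piFinset]
        intro i
        refine Fin.cases ?_ (fun i => ?_) i
        · simpa using hp.1
        · simpa using hp.2 i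
      · intro t ht
        rw [Fintype.mem_piFinset] at ht
        simp only [Finset.mem_product, Fintype.mem_piFinset]
        exact ⟨ht 0, fun i => ht _⟩
      · intro p _
        simp
      · intro t _
        exact Fin.cons_self_tail t
      · intro p _
        simp only [Fin.prod_univ_succ, Fin.sum_univ_succ, Fin.cons_zero, Fin.cons_succ]
        ring
    rw [h1]
    have h2 := poisson_one (l 0) (hl 0) (∑ j : Fin n, l (Fin.succ j) * a (Fin.succ j) ^ 2) c (a 0)
      (Finset.sum_nonneg fun j _ => mul_nonneg (hl _) (sq_nonneg _)) N
    calc _ ≤ ∑ x ∈ Finset.range N, (l 0 ^ x / (x ! : ℝ)) *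
          (Real.exp (∑ j : Fin n, l (Fin.succ j)) * (∑ j : Fin n, l (Fin.succ j) * a (Fin.succ j) ^ 2
            + (c + a 0 * ((x : ℝ) - l 0)) ^ 2)) := by
          refine Finset.sum_le_sum fun x _ => ?_
          rw [← Finset.mul_sum]
          refine mul_le_mul_of_nonneg_left ?_ (div_nonneg (pow_nonneg (hl 0) _) (Nat.cast_nonneg _))
          exact ih (fun j => l (Fin.succ j)) (fun j => a (Fin.succ j)) (fun j => hl _) _
      _ = Real.exp (∑ j : Fin n, l (Fin.succ j)) * ∑ x ∈ Finset.range N, (l 0 ^ x / (x ! : ℝ)) *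
          (∑ j : Fin n, l (Fin.succ j) * a (Fin.succ j) ^ 2
            + (c + a 0 * ((x : ℝ) - l 0)) ^ 2) := by
          rw [Finset.mul_sum]
          refine Finset.sum_congr rfl fun x _ => ?_
          ring
      _ ≤ _ := mul_le_mul_of_nonneg_left h2 (Real.exp_pos _).le
      _ = _ := by
          rw [Fin.sum_univ_succ, Fin.sum_univ_succ, Real.exp_add]
          ring

theorem layers_le (n : ℕ) (F : (Fin n → ℕ) → ℝ) (hF : ∀ t, 0 ≤ F t) :
    ∑ j : Fin n, ∑ t ∈ BB n (n - (j + 1)), F t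
      ≤ ∑ t ∈ Fintype.piFinset (fun _ : Fin n => Finset.range (n + 1)), F t := by
  rw [← Finset.sum_biUnion]
  · refine Finset.sum_le_sum_of_subset_of_nonneg ?_ (fun t _ _ => hF t)
    intro t ht
    rw [Finset.mem_biUnion] at ht
    obtain ⟨j, _, h⟩ := ht
    exact (Finset.mem_filter.mp h).1
  · intro i _ j _ hij
    refine Finset.disjoint_left.mpr fun t hi hj => hij ?_
    have h1 := (Finset.mem_filter.mp hi).2
    have h2 := (Finset.mem_filter.mp hj).2
    apply Fin.ext
    have := i.2
    have := j.2
    omega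

theorem size_bias (lam : ℕ → ℝ) (n : ℕ) (f : (Fin n → ℕ) → ℝ) :
    (n : ℝ) * ∑ s ∈ BB n n, wt lam n s * f s
      = ∑ j : Fin n, ((j : ℝ) + 1) * (lam ((j : ℕ) + 1) *
          ∑ t ∈ BB n (n - (j + 1)), wt lam n t * f (bump j t)) := by
  simp_rw [← key]
  rw [Finset.mul_sum]
  simp_rw [Finset.mul_sum]
  rw [Finset.sum_comm]
  refine Finset.sum_congr rfl fun s hs => ?_
  rw [mem_BB le_rfl] at hs
  have : (n : ℝ) = ∑ j : Fin n, ((j : ℝ) + 1) * (s j : ℝ) := by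
    conv_lhs => rw [← hs]
    unfold ellF
    push_cast
    rfl
  rw [this, Finset.sum_mul]
  refine Finset.sum_congr rfl fun j _ => ?_
  ring

theorem lin_bump {n : ℕ} (j : Fin n) (t : Fin n → ℕ) (b : Fin n → ℝ) :
    ∑ i, b i * (bump j t i : ℝ) = ∑ i, b i * (t i : ℝ) + b j := by
  rw [← Finset.add_sum_erase _ _ (Finset.mem_univ j),
    ← Finset.add_sum_erase (a := j) _ (fun i : Fin n => b i * (t i : ℝ)) (Finset.mem_univ j)]
  have : ∑ x ∈ Finset.univ.erase j, b x * (bump j t x : ℝ)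
      = ∑ x ∈ Finset.univ.erase j, b x * (t x : ℝ) := by
    refine Finset.sum_congr rfl fun x hx => ?_
    rw [bump, Function.update_of_ne (Finset.ne_of_mem_erase hx)]
  rw [this]
  simp [bump]
  ring

theorem Q_upper (lam : ℕ → ℝ) (Θ : ℝ) (hΘ : 0 < Θ) (hl : ∀ j, 1 ≤ j → 0 ≤ lam j)
    (hT : ∀ j : ℕ, 1 ≤ j → (j : ℝ) * lam j ≤ Θ) (n : ℕ) :
    (n : ℝ) * Qfun lam n ≤ Θ * Real.exp (∑ j : Fin n, lam ((j : ℕ) + 1)) := by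
  have h := size_bias lam n (fun _ => 1)
  simp only [mul_one] at h
  rw [Q_bridge' lam le_rfl] at h
  rw [h]
  have hw := wt_nonneg lam hl n
  calc _ ≤ ∑ j : Fin n, Θ * ∑ t ∈ BB n (n - (j + 1)), wt lam n t := by
        refine Finset.sum_le_sum fun j _ => ?_
        rw [← mul_assoc]
        refine mul_le_mul_of_nonneg_right ?_ (Finset.sum_nonneg fun t _ => hw t)
        have := hT (j + 1) (Nat.le_add_left 1 _)
        push_cast at this
        exact this
    _ = Θ * ∑ j : Fin n, ∑ t ∈ BB n (n - (j + 1)), wt lam n t := by rw [Finset.mul_sum]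
    _ ≤ _ := by
        refine mul_le_mul_of_nonneg_left ((layers_le n _ hw).trans ?_) hΘ.le
        have := poisson_box (n + 1) n (fun j => lam ((j : ℕ) + 1)) (fun _ => 0)
          (fun j => hl _ (Nat.le_add_left 1 _)) 1
        simpa [wt] using this

theorem second_moment (lam : ℕ → ℝ) (Θ : ℝ) (hΘ : 0 < Θ) (hl : ∀ j, 1 ≤ j → 0 ≤ lam j)
    (hT : ∀ j : ℕ, 1 ≤ j → (j : ℝ) * lam j ≤ Θ) (n : ℕ) (b : Fin n → ℝ) :
    (n : ℝ) * ∑ s ∈ BB n n, wt lam n s *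
        (∑ j, b j * (s j : ℝ) - ∑ j, b j * lam ((j : ℕ) + 1)) ^ 2
      ≤ 2 * Θ * (Real.exp (∑ j : Fin n, lam ((j : ℕ) + 1)) *
          ∑ j : Fin n, lam ((j : ℕ) + 1) * b j ^ 2)
        + 2 * n * ∑ j : Fin n, lam ((j : ℕ) + 1) * b j ^ 2 * Qfun lam (n - (j + 1)) := by
  rw [size_bias]
  have hw := wt_nonneg lam hl n
  set A := ∑ j : Fin n, b j * lam ((j : ℕ) + 1) with hA
  have hbox := poisson_box (n + 1) n (fun j => lam ((j : ℕ) + 1)) b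
          (fun j => hl _ (Nat.le_add_left 1 _)) 0
  simp only [zero_add, ← hA, ne_eq, OfNat.ofNat_ne_zero, not_false_eq_true, zero_pow, add_zero]
    at hbox
  have hlay := layers_le n (fun t => wt lam n t * (∑ j, b j * (t j : ℝ) - A) ^ 2)
    (fun t => mul_nonneg (hw t) (sq_nonneg _))
  have hstep : ∀ j : Fin n, ((j : ℝ) + 1) * (lam ((j : ℕ) + 1) *
          ∑ t ∈ BB n (n - (j + 1)), wt lam n t * (∑ i, b i * (bump j t i : ℝ) - A) ^ 2)
      ≤ 2 * Θ * (∑ t ∈ BB n (n - (j + 1)), wt lam n t * (∑ i, b i * (t i : ℝ) - A) ^ 2)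
        + 2 * n * (lam ((j : ℕ) + 1) * b j ^ 2 * Qfun lam (n - (j + 1))) := by
    intro j
    have hlj := hl (j + 1) (Nat.le_add_left 1 _)
    have hTj := hT (j + 1) (Nat.le_add_left 1 _)
    push_cast at hTj
    have hjn : (j : ℝ) + 1 ≤ n := by exact_mod_cast j.2
    have hQ := Q_bridge' lam (Nat.sub_le n (j + 1))
    set S := ∑ t ∈ BB n (n - (j + 1)), wt lam n t * (∑ i, b i * (t i : ℝ) - A) ^ 2 with hS
    have hS0 : 0 ≤ S := Finset.sum_nonneg fun t _ => mul_nonneg (hw t) (sq_nonneg _)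
    have hQ0 : 0 ≤ Qfun lam (n - (j + 1)) := by
      rw [← hQ]; exact Finset.sum_nonneg fun t _ => hw t
    have h1 : ∑ t ∈ BB n (n - (j + 1)), wt lam n t * (∑ i, b i * (bump j t i : ℝ) - A) ^ 2
        ≤ 2 * S + 2 * (b j ^ 2 * Qfun lam (n - (j + 1))) := by
      rw [hS, ← hQ, Finset.mul_sum, Finset.mul_sum, Finset.mul_sum, ← Finset.sum_add_distrib]
      refine Finset.sum_le_sum fun t _ => ?_
      rw [lin_bump]
      nlinarith [mul_nonneg (hw t) (sq_nonneg (∑ i, b i * (t i : ℝ) - A - b j))]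
    have hX : 0 ≤ lam ((j : ℕ) + 1) * (b j ^ 2 * Qfun lam (n - (j + 1))) := by positivity
    calc _ ≤ ((j : ℝ) + 1) * (lam ((j : ℕ) + 1) *
          (2 * S + 2 * (b j ^ 2 * Qfun lam (n - (j + 1))))) := by gcongr
      _ = 2 * (((j : ℝ) + 1) * lam ((j : ℕ) + 1) * S)
          + 2 * (((j : ℝ) + 1) * (lam ((j : ℕ) + 1) * (b j ^ 2 * Qfun lam (n - (j + 1))))) := by
          ring
      _ ≤ 2 * (Θ * S) + 2 * (n * (lam ((j : ℕ) + 1) * (b j ^ 2 * Qfun lam (n - (j + 1))))) := by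
          gcongr
      _ = _ := by ring
  calc _ ≤ _ := Finset.sum_le_sum fun j _ => hstep j
    _ = 2 * Θ * (∑ j : Fin n, ∑ t ∈ BB n (n - (j + 1)),
          wt lam n t * (∑ i, b i * (t i : ℝ) - A) ^ 2)
        + 2 * n * ∑ j : Fin n, lam ((j : ℕ) + 1) * b j ^ 2 * Qfun lam (n - (j + 1)) := by
        rw [Finset.sum_add_distrib, ← Finset.mul_sum, ← Finset.mul_sum]
    _ ≤ _ := by
        have := hlay.trans hbox
        gcongr

theorem big_part (lam : ℕ → ℝ) (hl : ∀ j, 1 ≤ j → 0 ≤ lam j) (n : ℕ) (c : Fin n → ℝ)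
    (hc : ∀ j : Fin n, 2 * ((j : ℕ) + 1) ≤ n → c j = 0) :
    ∑ s ∈ BB n n, wt lam n s * (∑ j, c j * (s j : ℝ)) ^ 2
      ≤ ∑ j : Fin n, lam ((j : ℕ) + 1) * c j ^ 2 * Qfun lam (n - (j + 1)) := by
  have hw := wt_nonneg lam hl n
  have hpt : ∀ s ∈ BB n n, (∑ j, c j * (s j : ℝ)) ^ 2 ≤ ∑ j, c j ^ 2 * (s j : ℝ) := by
    intro s hs
    rw [mem_BB le_rfl] at hs
    have hg : ∑ j : Fin n, (if 2 * ((j : ℕ) + 1) ≤ n then 0 else s j) ≤ 1 := by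
      by_contra hcon
      push Not at hcon
      have h1 : (n + 1) * ∑ j : Fin n, (if 2 * ((j : ℕ) + 1) ≤ n then 0 else s j)
          ≤ 2 * ellF n s := by
        unfold ellF
        rw [Finset.mul_sum, Finset.mul_sum]
        refine Finset.sum_le_sum fun j _ => ?_
        split_ifs with h
        · simp
        · rw [← mul_assoc]
          exact Nat.mul_le_mul_right _ (by omega)
      rw [hs] at h1
      nlinarith
    have hg' : ∑ j : Fin n, (if 2 * ((j : ℕ) + 1) ≤ n then (0 : ℝ) else (s j : ℝ)) ≤ 1 := by
      have : ((∑ j : Fin n, (if 2 * ((j : ℕ) + 1) ≤ n then 0 else s j) : ℕ) : ℝ) ≤ 1 := by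
        exact_mod_cast hg
      push_cast at this
      exact this
    have hcs := Finset.sum_sq_le_sum_mul_sum_of_sq_le_mul (Finset.univ : Finset (Fin n))
      (r := fun j => c j * (s j : ℝ)) (f := fun j => c j ^ 2 * (s j : ℝ))
      (g := fun j => if 2 * ((j : ℕ) + 1) ≤ n then (0 : ℝ) else (s j : ℝ))
      (fun j _ => by positivity) (fun j _ => by split_ifs <;> positivity)
      (fun j _ => by
        split_ifs with h
        · rw [hc j h]; simp
        · exact le_of_eq (by ring))
    refine hcs.trans ?_
    exact mul_le_of_le_one_right (Finset.sum_nonneg fun j _ => by positivity) hg'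
  calc _ ≤ ∑ s ∈ BB n n, wt lam n s * ∑ j, c j ^ 2 * (s j : ℝ) :=
        Finset.sum_le_sum fun s hs => mul_le_mul_of_nonneg_left (hpt s hs) (hw s)
    _ = ∑ j : Fin n, c j ^ 2 * ∑ s ∈ BB n n, wt lam n s * ((s j : ℝ) * 1) := by
        simp_rw [Finset.mul_sum]
        rw [Finset.sum_comm]
        refine Finset.sum_congr rfl fun j _ => Finset.sum_congr rfl fun s _ => ?_
        ring
    _ = _ := by
        refine Finset.sum_congr rfl fun j _ => ?_
        rw [key]
        simp only [mul_one]
        rw [Q_bridge' lam (Nat.sub_le n (j + 1))]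
        ring
    _ ≤ _ := le_rfl

theorem Icc_eq_fin (n : ℕ) (f : ℕ → ℝ) :
    ∑ j ∈ Finset.Icc 1 n, f j = ∑ j : Fin n, f ((j : ℕ) + 1) := by
  rw [Fin.sum_univ_eq_sum_range (fun i => f (i + 1)) n, Finset.range_eq_Ico,
    Finset.sum_Ico_add' f 0 n 1]
  rfl

theorem Q_ratio (lam : ℕ → ℝ) (Θ θ' : ℝ) (hΘ : 0 < Θ) (hθ' : 0 < θ')
    (hl : ∀ j, 1 ≤ j → 0 ≤ lam j)
    (hT : ∀ j : ℕ, 1 ≤ j → (j : ℝ) * lam j ≤ Θ)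
    (hQ : ∀ n : ℕ, 1 ≤ n →
      θ' * Real.exp (∑ j ∈ Finset.Icc 1 n, lam j) ≤ n * Qfun lam n)
    (n j : ℕ) (hj : 1 ≤ j) (hjn : 2 * j ≤ n) :
    θ' * Qfun lam n ≤ Θ * Real.exp Θ * Qfun lam (n - j) := by
  obtain ⟨m, rfl⟩ := Nat.exists_eq_add_of_le (show j ≤ n by omega)
  rw [Nat.add_sub_cancel_left]
  have hjm : j ≤ m := by omega
  have hm : 1 ≤ m := by omega
  have hu := Q_upper lam Θ hΘ hl hT (j + m)
  have hlow := hQ m hm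
  rw [← Icc_eq_fin (j + m) lam] at hu
  have hm0 : (0 : ℝ) < m := by exact_mod_cast hm
  have hsum : ∑ i ∈ Finset.Icc 1 (j + m), lam i ≤ ∑ i ∈ Finset.Icc 1 m, lam i + Θ := by
    have hd : ∀ k : ℕ, ∑ i ∈ Finset.Icc 1 (k + m), lam i
        ≤ ∑ i ∈ Finset.Icc 1 m, lam i + k * (Θ / m) := by
      intro k
      induction k with
      | zero => simp
      | succ k ih =>
        rw [show k + 1 + m = (k + m) + 1 by ring, Finset.sum_Icc_succ_top (by omega)]
        have h1 := hT (k + m + 1) (by omega)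
        have h0 := hl (k + m + 1) (by omega)
        have : lam (k + m + 1) ≤ Θ / m := by
          rw [le_div_iff₀ hm0]
          refine le_trans ?_ h1
          rw [mul_comm]
          refine mul_le_mul_of_nonneg_right ?_ h0
          exact_mod_cast (by omega : m ≤ k + m + 1)
        push_cast
        linarith
    refine (hd j).trans ?_
    have : (j : ℝ) * (Θ / m) ≤ Θ := by
      rw [← mul_div_assoc, div_le_iff₀ hm0, mul_comm]
      refine mul_le_mul_of_nonneg_left ?_ hΘ.le
      exact_mod_cast hjm
    linarith
  have hexp : Real.exp (∑ i ∈ Finset.Icc 1 (j + m), lam i)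
      ≤ Real.exp (∑ i ∈ Finset.Icc 1 m, lam i) * Real.exp Θ := by
    rw [← Real.exp_add]
    exact Real.exp_le_exp.mpr hsum
  have hQ0 : 0 ≤ Qfun lam (j + m) := Finset.sum_nonneg fun t _ => wt_nonneg lam hl _ t
  have hmm : (m : ℝ) * Qfun lam (j + m) ≤ ((j + m : ℕ) : ℝ) * Qfun lam (j + m) := by
    refine mul_le_mul_of_nonneg_right ?_ hQ0
    exact_mod_cast (by omega : m ≤ j + m)
  refine le_of_mul_le_mul_left ?_ hm0
  calc (m : ℝ) * (θ' * Qfun lam (j + m)) = θ' * (m * Qfun lam (j + m)) := by ring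
    _ ≤ θ' * (Θ * (Real.exp (∑ i ∈ Finset.Icc 1 m, lam i) * Real.exp Θ)) := by
        refine mul_le_mul_of_nonneg_left ?_ hθ'.le
        refine (hmm.trans hu).trans ?_
        gcongr
    _ = Θ * Real.exp Θ * (θ' * Real.exp (∑ i ∈ Finset.Icc 1 m, lam i)) := by ring
    _ ≤ Θ * Real.exp Θ * (m * Qfun lam m) := by gcongr
    _ = _ := by ring

theorem core (lam : ℕ → ℝ) (Θ θ' : ℝ) (hΘ : 0 < Θ) (hθ' : 0 < θ')
    (hl : ∀ j, 1 ≤ j → 0 ≤ lam j)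
    (hT : ∀ j : ℕ, 1 ≤ j → (j : ℝ) * lam j ≤ Θ)
    (hQ : ∀ n : ℕ, 1 ≤ n →
      θ' * Real.exp (∑ j ∈ Finset.Icc 1 n, lam j) ≤ n * Qfun lam n)
    (n : ℕ) (hn : 1 ≤ n) (a : ℕ → ℝ) :
    variancen lam n (fun s => ∑ j : Fin n, a ((j : ℕ) + 1) * (s j : ℝ)) ≤
      (4 * (Θ / θ') * (Θ * Real.exp Θ / θ') + 6) * ∑ j ∈ Finset.Icc 1 n,
          lam j * (a j) ^ 2 * (Qfun lam (n - j) / Qfun lam n) := by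
  have hn0 : (0 : ℝ) < n := by exact_mod_cast hn
  have hQpos : 0 < Qfun lam n := by
    have h1 := hQ n hn
    have h2 : 0 < θ' * Real.exp (∑ j ∈ Finset.Icc 1 n, lam j) := by positivity
    exact (mul_pos_iff_of_pos_left hn0).mp (h2.trans_le h1)
  have hw := wt_nonneg lam hl n
  have hQnn : ∀ m, 0 ≤ Qfun lam m := fun m => Finset.sum_nonneg fun t _ => wt_nonneg lam hl _ t
  set b : Fin n → ℝ := fun j => if 2 * ((j : ℕ) + 1) ≤ n then a (j + 1) else 0 with hb
  set c : Fin n → ℝ := fun j => if 2 * ((j : ℕ) + 1) ≤ n then 0 else a (j + 1) with hc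
  set T : ℝ := ∑ j : Fin n, lam ((j : ℕ) + 1) * a (j + 1) ^ 2 * Qfun lam (n - (j + 1)) with hTdef
  have hsplit : ∀ s : Fin n → ℕ, ∑ j : Fin n, a ((j : ℕ) + 1) * (s j : ℝ)
      = ∑ j, b j * (s j : ℝ) + ∑ j, c j * (s j : ℝ) := by
    intro s
    rw [← Finset.sum_add_distrib]
    refine Finset.sum_congr rfl fun j _ => ?_
    simp only [hb, hc]
    split_ifs <;> ring
  set A := ∑ j : Fin n, b j * lam ((j : ℕ) + 1) with hA
  set h : (Fin n → ℕ) → ℝ := fun s => ∑ j : Fin n, a ((j : ℕ) + 1) * (s j : ℝ) with hh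
  have hterm : ∀ j : Fin n, 0 ≤ lam ((j : ℕ) + 1) * a (j + 1) ^ 2 * Qfun lam (n - (j + 1)) :=
    fun j => mul_nonneg (mul_nonneg (hl _ (Nat.le_add_left 1 _)) (sq_nonneg _)) (hQnn _)
  -- bounds on the two pieces
  have hbT : ∑ j : Fin n, lam ((j : ℕ) + 1) * b j ^ 2 * Qfun lam (n - (j + 1)) ≤ T := by
    refine Finset.sum_le_sum fun j _ => ?_
    simp only [hb]
    split_ifs
    · exact le_rfl
    · simpa using hterm j
  have hcT : ∑ j : Fin n, lam ((j : ℕ) + 1) * c j ^ 2 * Qfun lam (n - (j + 1)) ≤ T := by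
    refine Finset.sum_le_sum fun j _ => ?_
    simp only [hc]
    split_ifs
    · simpa using hterm j
    · exact le_rfl
  have hbQ : θ' * Qfun lam n * ∑ j : Fin n, lam ((j : ℕ) + 1) * b j ^ 2 ≤ Θ * Real.exp Θ * T := by
    rw [hTdef, Finset.mul_sum, Finset.mul_sum]
    refine Finset.sum_le_sum fun j _ => ?_
    simp only [hb]
    split_ifs with hj
    · have := Q_ratio lam Θ θ' hΘ hθ' hl hT hQ n (j + 1) (Nat.le_add_left 1 _) hj
      have h0 : 0 ≤ lam ((j : ℕ) + 1) * a (j + 1) ^ 2 :=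
        mul_nonneg (hl _ (Nat.le_add_left 1 _)) (sq_nonneg _)
      have := mul_le_mul_of_nonneg_right this h0
      linarith
    · have := mul_nonneg (mul_pos hΘ (Real.exp_pos Θ)).le (hterm j)
      simpa using this
  have hsm := second_moment lam Θ hΘ hl hT n b
  rw [← hA] at hsm
  have hbig := (big_part lam hl n c (fun j hj => by simp only [hc]; rw [if_pos hj])).trans hcT
  have hexp := hQ n hn
  rw [Icc_eq_fin n lam] at hexp
  set E := Real.exp (∑ j : Fin n, lam ((j : ℕ) + 1))
  set SB := ∑ s ∈ BB n n, wt lam n s * (∑ j, b j * (s j : ℝ) - A) ^ 2 with hSB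
  set W := ∑ j : Fin n, lam ((j : ℕ) + 1) * b j ^ 2 with hW
  have hW0 : 0 ≤ W := Finset.sum_nonneg fun j _ =>
    mul_nonneg (hl _ (Nat.le_add_left 1 _)) (sq_nonneg _)
  have hSBle : SB ≤ (2 * (Θ / θ') * (Θ * Real.exp Θ / θ') + 2) * T := by
    have h1 : E ≤ n * Qfun lam n / θ' := by
      rw [le_div_iff₀ hθ']; linarith
    have h2 : Qfun lam n * W ≤ Θ * Real.exp Θ / θ' * T := by
      rw [div_mul_eq_mul_div, le_div_iff₀ hθ']; linarith
    refine le_of_mul_le_mul_left ?_ hn0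
    calc (n : ℝ) * SB ≤ _ := hsm
      _ ≤ 2 * Θ * (n * Qfun lam n / θ' * W) + 2 * n * T := by gcongr
      _ = 2 * (Θ / θ') * n * (Qfun lam n * W) + 2 * n * T := by ring
      _ ≤ 2 * (Θ / θ') * n * (Θ * Real.exp Θ / θ' * T) + 2 * n * T := by gcongr
      _ = _ := by ring
  -- variance bound
  have hvar : variancen lam n h ≤ (∑ s ∈ BB n n, wt lam n s * (h s - A) ^ 2) / Qfun lam n := by
    have hE : ∑ s ∈ BB n n, wt lam n s * (h s - A) ^ 2
        = ∑ s ∈ BB n n, wt lam n s * (h s) ^ 2 - 2 * A * ∑ s ∈ BB n n, wt lam n s * h s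
          + A ^ 2 * Qfun lam n := by
      clear_value A
      rw [← Q_bridge' lam (le_refl n), Finset.mul_sum, Finset.mul_sum, ← Finset.sum_sub_distrib,
        ← Finset.sum_add_distrib]
      refine Finset.sum_congr rfl fun s _ => ?_
      ring
    rw [hE, add_div, sub_div, mul_div_assoc, mul_div_assoc, div_self hQpos.ne']
    unfold variancen expectn
    rw [omega_eq_BB]
    nlinarith [sq_nonneg ((∑ s ∈ BB n n, wt lam n s * h s) / Qfun lam n - A)]
  have hSH : ∑ s ∈ BB n n, wt lam n s * (h s - A) ^ 2
      ≤ 2 * SB + 2 * ∑ s ∈ BB n n, wt lam n s * (∑ j, c j * (s j : ℝ)) ^ 2 := by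
    rw [hSB, Finset.mul_sum, Finset.mul_sum, ← Finset.sum_add_distrib]
    refine Finset.sum_le_sum fun s _ => ?_
    have hs : h s = _ := hsplit s
    rw [hs]
    nlinarith [mul_nonneg (hw s) (sq_nonneg (∑ j, b j * (s j : ℝ) - A - ∑ j, c j * (s j : ℝ)))]
  have hfin : ∑ j ∈ Finset.Icc 1 n, lam j * (a j) ^ 2 * (Qfun lam (n - j) / Qfun lam n)
      = T / Qfun lam n := by
    rw [Icc_eq_fin n (fun j => lam j * (a j) ^ 2 * (Qfun lam (n - j) / Qfun lam n)), hTdef,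
      Finset.sum_div]
    refine Finset.sum_congr rfl fun j _ => ?_
    ring
  rw [hfin, ← mul_div_assoc]
  refine hvar.trans ?_
  rw [div_le_div_iff_of_pos_right hQpos]
  linarith

/-- Rescaled weights. -/
noncomputable def scl (ρ : ℝ) (lam : ℕ → ℝ) : ℕ → ℝ := fun j => lam j * ρ ^ j

theorem wt_scl (ρ : ℝ) (lam : ℕ → ℝ) (n : ℕ) (s : Fin n → ℕ) :
    wt (scl ρ lam) n s = wt lam n s * ρ ^ ellF n s := by
  unfold wt ellF scl
  rw [← Finset.prod_pow_eq_pow_sum, ← Finset.prod_mul_distrib]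
  refine Finset.prod_congr rfl fun j _ => ?_
  rw [mul_pow, ← pow_mul]
  ring

theorem sum_scl (ρ : ℝ) (lam : ℕ → ℝ) (n : ℕ) (f : (Fin n → ℕ) → ℝ) :
    ∑ s ∈ OmegaSet n, wt (scl ρ lam) n s * f s
      = ρ ^ n * ∑ s ∈ OmegaSet n, wt lam n s * f s := by
  rw [omega_eq_BB, Finset.mul_sum]
  refine Finset.sum_congr rfl fun s hs => ?_
  rw [mem_BB le_rfl] at hs
  rw [wt_scl, hs]
  ring

theorem Q_scl (ρ : ℝ) (lam : ℕ → ℝ) (n : ℕ) :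
    Qfun (scl ρ lam) n = ρ ^ n * Qfun lam n := by
  have := sum_scl ρ lam n (fun _ => 1)
  simpa [Qfun] using this

theorem expect_scl (ρ : ℝ) (hρ : 0 < ρ) (lam : ℕ → ℝ) (n : ℕ) (f : (Fin n → ℕ) → ℝ) :
    expectn (scl ρ lam) n f = expectn lam n f := by
  unfold expectn
  rw [sum_scl, Q_scl, mul_div_mul_left _ _ (pow_pos hρ n).ne']

/-- Theorem 2: for a weakly logarithmic class of assemblies (with constants
`ρ, Θ, θ, θ′ > 0`, `n₀ ≥ 1`) there is a constant `C > 0` such that for every `n ≥ 1`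
and every completely additive function `h(s̄) = ∑_{j=1}^n a_j·s_j`,
`V_n h ≤ C · ∑_{j≤n} λ_j a_j² · Q(n−j)/Q(n)`. -/
theorem variance_completely_additive_weakly_logarithmic
    (ρ Θ θ θ' : ℝ) (n₀ : ℕ) (hρ : 0 < ρ) (hΘ : 0 < Θ) (hθ : 0 < θ) (hθ' : 0 < θ')
    (hn₀ : 1 ≤ n₀) :
    ∃ C : ℝ, 0 < C ∧
      ∀ lam : ℕ → ℝ,
        (∀ j, 1 ≤ j → 0 ≤ lam j) →
        (∀ j, 1 ≤ j → ρ ^ j * j * lam j ≤ Θ) →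
        (∀ n, n₀ ≤ n → θ * n ≤ ∑ j ∈ Finset.Icc 1 n, ρ ^ j * j * lam j) →
        (∀ n : ℕ, 1 ≤ n →
          θ' * Real.exp (∑ j ∈ Finset.Icc 1 n, lam j * ρ ^ j) ≤ n * Qfun lam n * ρ ^ n) →
        ∀ n : ℕ, 1 ≤ n →
          ∀ a : ℕ → ℝ,
            variancen lam n (fun s => ∑ j : Fin n, a ((j : ℕ) + 1) * (s j : ℝ)) ≤
              C * ∑ j ∈ Finset.Icc 1 n,
                  lam j * (a j) ^ 2 * (Qfun lam (n - j) / Qfun lam n) := by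
  refine ⟨4 * (Θ / θ') * (Θ * Real.exp Θ / θ') + 6, by positivity, ?_⟩
  intro lam hl hT _ hQ n hn a
  have h := core (scl ρ lam) Θ θ' hΘ hθ'
    (fun j hj => mul_nonneg (hl j hj) (pow_pos hρ j).le)
    (fun j hj => by
      have := hT j hj
      unfold scl
      linarith)
    (fun m hm => by
      have := hQ m hm
      rw [Q_scl]
      unfold scl
      linarith) n hn a
  unfold variancen at h ⊢
  rw [expect_scl ρ hρ, expect_scl ρ hρ] at h
  refine h.trans (le_of_eq ?_)
  congr 1
  refine Finset.sum_congr rfl fun j hj => ?_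
  have hjn := (Finset.mem_Icc.mp hj).2
  rw [Q_scl, Q_scl]
  unfold scl
  have h1 : ρ ^ n = ρ ^ j * ρ ^ (n - j) := by rw [← pow_add, Nat.add_sub_cancel' hjn]
  have h2 : ρ ^ j ≠ 0 := (pow_pos hρ _).ne'
  have h3 : ρ ^ (n - j) ≠ 0 := (pow_pos hρ _).ne'
  rw [h1, mul_div_mul_comm]
  field_simp
end
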